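/- arXiv:2201.00984 — 7 statements merged into one kernel-verified Lean document; each statement's English description precedes it below -/
import Mathlib

section
/- Let (R, m, k) be a commutative Noetherian local ring and let M be an Ulrich R-module of dimension s. If N is a finitely generated R-module and there exists an integer n ≥ 1 such that Tor_i^R(M, N) = 0 for all n ≤ i ≤ n+s, then the projective dimension of N over R is finite and pd_R N < n+s. -/
open CategoryTheory IsLocalRing

section Prelim

variable (R : Type) [CommRing R]

/-- `Tor_i^R(M, N) = 0`. -/
noncomputable def TorVanish (M N : Type) [AddCommGroup M] [Module R M]
    [AddCommGroup N] [Module R N] (i : ℕ) : Prop :=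
  Subsingleton (((Tor (ModuleCat R) i).obj (ModuleCat.of R M)).obj (ModuleCat.of R N))

/-- `Ext_R^i(M, N) = 0`. -/
noncomputable def ExtVanish (M N : Type) [AddCommGroup M] [Module R M]
    [AddCommGroup N] [Module R N] (i : ℕ) : Prop :=
  Subsingleton (((Ext R (ModuleCat R) i).obj (Opposite.op (ModuleCat.of R M))).obj
    (ModuleCat.of R N))

/-- `pd_R M < n`, expressed by the standard characterization
`Ext_R^i(M, -) = 0` for all `i ≥ n`. -/
def ProjDimLT (M : Type) [AddCommGroup M] [Module R M] (n : ℕ) : Prop :=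
  ∀ (N : ModuleCat R) (i : ℕ), n ≤ i → ExtVanish R M N i

/-- `pd_R M < ∞`. -/
def ProjDimFinite (M : Type) [AddCommGroup M] [Module R M] : Prop :=
  ∃ n, ProjDimLT R M n

/-- `id_R M < n`, expressed by the standard characterization
`Ext_R^i(-, M) = 0` for all `i ≥ n`. -/
def InjDimLT (M : Type) [AddCommGroup M] [Module R M] (n : ℕ) : Prop :=
  ∀ (N : ModuleCat R) (i : ℕ), n ≤ i → ExtVanish R N M i

/-- `id_R M < ∞`. -/
def InjDimFinite (M : Type) [AddCommGroup M] [Module R M] : Prop :=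
  ∃ n, InjDimLT R M n

/-- `M` is a Tor-rigid `R`-module. -/
def TorRigid (M : Type) [AddCommGroup M] [Module R M] : Prop :=
  ∀ (N : ModuleCat R), Module.Finite R N → ∀ n : ℕ, 1 ≤ n → TorVanish R M N n →
    ∀ i : ℕ, n ≤ i → TorVanish R M N i

variable [IsLocalRing R]

/-- The depth of `M`: the supremum of lengths of `M`-regular sequences contained in
the maximal ideal. -/
noncomputable def depth (M : Type) [AddCommGroup M] [Module R M] : ℕ∞ :=
  sSup {n : ℕ∞ | ∃ rs : List R, (∀ x ∈ rs, x ∈ maximalIdeal R) ∧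
    RingTheory.Sequence.IsRegular M rs ∧ (rs.length : ℕ∞) = n}

/-- The dimension of a module, i.e. the Krull dimension of `R ⧸ ann M`. -/
noncomputable def moduleDim (M : Type) [AddCommGroup M] [Module R M] : WithBot ℕ∞ :=
  ringKrullDim (R ⧸ Module.annihilator R M)

/-- `M` is an Ulrich `R`-module of dimension `s` : `M` is nonzero, Cohen–Macaulay of
dimension `s`, and there is an `M`-regular sequence `x₁, …, x_s` in the maximal ideal
with `mM = (x₁, …, x_s)M`. -/
def IsUlrich (M : Type) [AddCommGroup M] [Module R M] (s : ℕ) : Prop :=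
  Nontrivial M ∧ moduleDim R M = (s : ℕ∞) ∧ depth R M = (s : ℕ∞) ∧
  ∃ rs : List R, rs.length = s ∧ (∀ x ∈ rs, x ∈ maximalIdeal R) ∧
    RingTheory.Sequence.IsRegular M rs ∧
    (maximalIdeal R) • (⊤ : Submodule R M) = (Ideal.ofList rs) • ⊤

/-- `R` is a regular local ring: the maximal ideal is generated by `dim R` elements. -/
def IsRegularLocal : Prop :=
  ∃ s : Finset R, Ideal.span (s : Set R) = maximalIdeal R ∧
    (s.card : WithBot ℕ∞) = ringKrullDim R

/-- `R` (of dimension `d`) has minimal multiplicity: there is an `R`-regular sequence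
`x₁, …, x_d` in the maximal ideal `m` with `m² = (x₁, …, x_d)m`. -/
def HasMinimalMultiplicity (d : ℕ) : Prop :=
  ∃ rs : List R, rs.length = d ∧ (∀ x ∈ rs, x ∈ maximalIdeal R) ∧
    RingTheory.Sequence.IsWeaklyRegular R rs ∧
    maximalIdeal R ^ 2 = Ideal.ofList rs * maximalIdeal R

/-- The `n`-th Betti number of `M` over the local ring `R`, i.e. the dimension over the
residue field `k = R ⧸ m` of `Tor_n^R(M, k)` (which is an `m`-torsion module, so we take
the dimension of its reduction mod `m`). -/
noncomputable def betti (M : Type) [AddCommGroup M] [Module R M] (n : ℕ) : ℕ :=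
  Module.finrank (R ⧸ maximalIdeal R)
    ((((Tor (ModuleCat R) n).obj (ModuleCat.of R M)).obj
        (ModuleCat.of R (R ⧸ maximalIdeal R))) ⧸
      (maximalIdeal R • (⊤ : Submodule R
        (((Tor (ModuleCat R) n).obj (ModuleCat.of R M)).obj
          (ModuleCat.of R (R ⧸ maximalIdeal R))))))

end Prelim


section UlrichAux
open TensorProduct

variable {R : Type} [CommRing R]

/-- exactness of `M ⊗ A → M ⊗ B → M ⊗ C` -/
def ExT (M : Type) [AddCommGroup M] [Module R M] {A B C : Type} [AddCommGroup A] [AddCommGroup B]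
    [AddCommGroup C] [Module R A] [Module R B] [Module R C] (f : A →ₗ[R] B) (g : B →ₗ[R] C) : Prop :=
  ∀ z : M ⊗[R] B, g.lTensor M z = 0 → ∃ y, f.lTensor M y = z

variable {A B C D : Type} [AddCommGroup A] [AddCommGroup B]
    [AddCommGroup C] [AddCommGroup D] [Module R A] [Module R B] [Module R C] [Module R D]

theorem lcomm {M M' : Type} [AddCommGroup M] [Module R M] [AddCommGroup M'] [Module R M']
    (p : M →ₗ[R] M') (f : A →ₗ[R] B) (z : M ⊗[R] A) :
    f.lTensor M' (p.rTensor A z) = p.rTensor B (f.lTensor M z) := by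
  rw [← LinearMap.comp_apply, ← LinearMap.comp_apply, LinearMap.lTensor_comp_rTensor,
    LinearMap.rTensor_comp_lTensor]

theorem ExT.retract {M L : Type} [AddCommGroup M] [Module R M] [AddCommGroup L] [Module R L]
    {f : A →ₗ[R] B} {g : B →ₗ[R] C} (h : ExT M f g) (j : L →ₗ[R] M) (p : M →ₗ[R] L)
    (hpj : p ∘ₗ j = LinearMap.id) : ExT L f g := by
  intro z hz
  obtain ⟨y, hy⟩ := h (j.rTensor B z) (by rw [lcomm, hz, map_zero])
  refine ⟨p.rTensor A y, ?_⟩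
  rw [lcomm, hy, ← LinearMap.comp_apply, ← LinearMap.rTensor_comp, hpj]
  simp

theorem ExT.quot {M : Type} [AddCommGroup M] [Module R M] (r : R) (hr : IsSMulRegular M r)
    {f : A →ₗ[R] B} {g : B →ₗ[R] C} {h : C →ₗ[R] D} [Module.Flat R D] (hgh : h ∘ₗ g = 0)
    (h1 : ExT M f g) (h2 : ExT M g h) : ExT (QuotSMulTop r M) f g := by
  intro z hz
  set q : M →ₗ[R] QuotSMulTop r M := Submodule.mkQ _ with hq
  have hqs : Function.Surjective q := Submodule.mkQ_surjective _
  have hex : Function.Exact (LinearMap.lsmul R M r) q := by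
    intro m
    rw [hq, Submodule.mkQ_apply, Submodule.Quotient.mk_eq_zero]
    constructor
    · intro hm
      obtain ⟨y, -, hy⟩ := (Submodule.mem_smul_pointwise_iff_exists _ _ _).1 hm
      exact ⟨y, hy⟩
    · rintro ⟨y, rfl⟩
      exact Submodule.smul_mem_pointwise_smul _ _ _ trivial
  obtain ⟨z', rfl⟩ := LinearMap.rTensor_surjective B hqs z
  rw [lcomm] at hz
  obtain ⟨w, hw⟩ := (rTensor_exact C hex hqs _).1 hz
  have hw0 : h.lTensor M w = 0 := by
    have inj : Function.Injective ((LinearMap.lsmul R M r).rTensor D) :=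
      Module.Flat.rTensor_preserves_injective_linearMap _ hr
    apply inj
    rw [← lcomm, hw, ← LinearMap.comp_apply, ← LinearMap.lTensor_comp, hgh]
    simp
  obtain ⟨v, hv⟩ := h2 w hw0
  obtain ⟨u, hu⟩ := h1 (z' - (LinearMap.lsmul R M r).rTensor B v) (by
    rw [map_sub, lcomm, hv, hw, sub_self])
  refine ⟨q.rTensor A u, ?_⟩
  rw [lcomm, hu, map_sub, (rTensor_exact B hex hqs).apply_apply_eq_zero, sub_zero]

theorem ExT.seq (X : ℕ → Type) [∀ i, AddCommGroup (X i)] [∀ i, Module R (X i)]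
    [∀ i, Module.Flat R (X i)] (d : ∀ i, X (i+1) →ₗ[R] X i) (hd : ∀ i, d i ∘ₗ d (i+1) = 0)
    (rs : List R) : ∀ (n : ℕ) (M : Type) [AddCommGroup M] [Module R M],
      RingTheory.Sequence.IsWeaklyRegular M rs →
      (∀ i, n ≤ i → i ≤ n + rs.length → ExT M (d (i+1)) (d i)) →
      ExT (M ⧸ (Ideal.ofList rs • ⊤ : Submodule R M)) (d (n + rs.length + 1)) (d (n+rs.length)) := by
  induction rs with
  | nil =>
    intro n M _ _ _ h
    have e : (Ideal.ofList ([] : List R) • ⊤ : Submodule R M) = ⊥ := by simp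
    let e' := Submodule.quotEquivOfEqBot _ e
    exact (h n le_rfl (by simp)).retract e'.toLinearMap e'.symm.toLinearMap (by ext; simp)
  | cons r rs ih =>
    intro n M _ _ hreg h
    rw [RingTheory.Sequence.isWeaklyRegular_cons_iff] at hreg
    have := ih (n+1) (QuotSMulTop r M) hreg.2 (by
      intro i h1 h2
      obtain ⟨i, rfl⟩ : ∃ k, i = k + 1 := ⟨i - 1, by omega⟩
      exact ExT.quot r hreg.1 (hd i) (h (i+1) (by omega) (by simp; omega))
        (h i (by omega) (by simp; omega)))
    have e1 : n + 1 + rs.length = n + (r :: rs).length := by simp; omega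
    rw [e1] at this
    let e' := Submodule.quotOfListConsSMulTopEquivQuotSMulTopInner M r rs
    exact this.retract e'.toLinearMap e'.symm.toLinearMap (by ext; simp)

theorem ExT.residue [IsLocalRing R] {L : Type} [AddCommGroup L] [Module R L] [Nontrivial L]
    (hL : ∀ x ∈ maximalIdeal R, ∀ l : L, x • l = 0) {f : A →ₗ[R] B} {g : B →ₗ[R] C}
    (h : ExT L f g) : ExT (ResidueField R) f g := by
  have ht : Module.IsTorsionBySet R L (maximalIdeal R : Set R) := fun l x => hL x.1 x.2 l
  let : Module (R ⧸ maximalIdeal R) L := ht.module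
  have : IsScalarTower R (R ⧸ maximalIdeal R) L := ht.isScalarTower
  let : Module (ResidueField R) L := ht.module
  have : IsScalarTower R (ResidueField R) L := ht.isScalarTower
  obtain ⟨l, hl⟩ := exists_ne (0 : L)
  obtain ⟨φ, hφ⟩ := LinearMap.exists_leftInverse_of_injective
    (LinearMap.toSpanSingleton (ResidueField R) L l) (LinearMap.ker_toSpanSingleton _ hl)
  refine h.retract ((LinearMap.toSpanSingleton (ResidueField R) L l).restrictScalars R)
    (φ.restrictScalars R) ?_
  ext x
  exact LinearMap.congr_fun hφ _

/-- A split-type conclusion -/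
theorem regular_of_exT [IsLocalRing R] [Module.Finite R B] [Module.Finite R C] [Module.Free R C]
    {f : A →ₗ[R] B} {g : B →ₗ[R] C} (hfg : Function.Exact f g)
    (h : ExT (ResidueField R) f g) : ∃ ρ : C →ₗ[R] B, g ∘ₗ ρ ∘ₗ g = g := by
  let π := (LinearMap.range f).mkQ
  have hle : LinearMap.range f ≤ LinearMap.ker g := by
    rintro _ ⟨y, rfl⟩; exact hfg.apply_apply_eq_zero y
  let ι : (B ⧸ LinearMap.range f) →ₗ[R] C := (LinearMap.range f).liftQ g hle
  have hιπ : ι ∘ₗ π = g := Submodule.liftQ_mkQ _ _ _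
  have hπs : Function.Surjective π := Submodule.mkQ_surjective _
  have hinj : Function.Injective (ι.lTensor (ResidueField R)) := by
    rw [injective_iff_map_eq_zero]
    intro z hz
    obtain ⟨z, rfl⟩ := LinearMap.lTensor_surjective (ResidueField R) hπs z
    rw [← LinearMap.comp_apply, ← LinearMap.lTensor_comp, hιπ] at hz
    obtain ⟨y, rfl⟩ := h z hz
    rw [← LinearMap.comp_apply, ← LinearMap.lTensor_comp]
    have : π ∘ₗ f = 0 := by
      ext y; exact (Submodule.Quotient.mk_eq_zero _).2 ⟨y, rfl⟩
    rw [this]; simp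
  obtain ⟨r, hr⟩ := (IsLocalRing.split_injective_iff_lTensor_residueField_injective ι).2 hinj
  obtain ⟨ρ, hρ⟩ := Module.projective_lifting_property π r hπs
  refine ⟨ρ, ?_⟩
  ext b
  have h1 : ∀ c, π (ρ c) = r c := fun c => LinearMap.congr_fun hρ c
  have h2 : ∀ c, r (ι c) = c := fun c => LinearMap.congr_fun hr c
  have h3 : ∀ c, ι (π c) = g c := fun c => LinearMap.congr_fun hιπ c
  simp only [LinearMap.comp_apply]
  rw [← h3 (ρ (g b)), h1, ← h3 b, h2]

theorem regular_succ [Module.Projective R B] 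
    {f : A →ₗ[R] B} {g : B →ₗ[R] C} (hfg : Function.Exact f g) (ρ : C →ₗ[R] B)
    (h : g ∘ₗ ρ ∘ₗ g = g) : ∃ σ : B →ₗ[R] A, ∀ b, b = ρ (g b) + f (σ b) := by
  let e : B →ₗ[R] LinearMap.range f := (LinearMap.id - ρ ∘ₗ g).codRestrict _ (by
    intro b
    have h1 : g (ρ (g b)) = g b := LinearMap.congr_fun h b
    have h2 : g ((LinearMap.id - ρ ∘ₗ g : B →ₗ[R] B) b) = 0 := by
      rw [LinearMap.sub_apply, map_sub, LinearMap.comp_apply, h1, LinearMap.id_apply, sub_self]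
    exact (hfg _).1 h2)
  obtain ⟨σ, hσ⟩ := Module.projective_lifting_property f.rangeRestrict e f.surjective_rangeRestrict
  refine ⟨σ, fun b => ?_⟩
  have := congrArg Subtype.val (LinearMap.congr_fun hσ b)
  have h3 : f (σ b) = b - ρ (g b) := this
  rw [h3]; abel

theorem regular_succ' [Module.Projective R B] 
    {f : A →ₗ[R] B} {g : B →ₗ[R] C} (hfg : Function.Exact f g) 
    (h : ∃ ρ : C →ₗ[R] B, g ∘ₗ ρ ∘ₗ g = g) : ∃ σ : B →ₗ[R] A, f ∘ₗ σ ∘ₗ f = f := by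
  obtain ⟨ρ, h⟩ := h
  obtain ⟨σ, hσ⟩ := regular_succ hfg ρ h
  refine ⟨σ, ?_⟩
  ext a
  have := hσ (f a)
  rw [hfg.apply_apply_eq_zero, map_zero, zero_add] at this
  exact this.symm

end UlrichAux
section UlrichRes
open TensorProduct
variable (R : Type) [CommRing R] [IsNoetherianRing R]

theorem exists_cover (K : Type) [AddCommGroup K] [Module R K] [Module.Finite R K] :
    ∃ p : Σ m : ℕ, ((Fin m → R) →ₗ[R] K), Function.Surjective p.2 := by
  obtain ⟨m, f, hf⟩ := Module.Finite.exists_fin' R K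
  exact ⟨⟨m, f⟩, hf⟩

/-- chosen cover -/
noncomputable def cov (K : Type) [AddCommGroup K] [Module R K] [Module.Finite R K] :
    Σ m : ℕ, ((Fin m → R) →ₗ[R] K) := (exists_cover R K).choose

theorem cov_surj (K : Type) [AddCommGroup K] [Module R K] [Module.Finite R K] :
    Function.Surjective (cov R K).2 := (exists_cover R K).choose_spec

variable (N : Type) [AddCommGroup N] [Module R N] [Module.Finite R N]

/-- states: rank and the next syzygy -/
noncomputable def stt : ℕ → Σ m : ℕ, Submodule R (Fin m → R)
  | 0 => ⟨(cov R N).1, LinearMap.ker (cov R N).2⟩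
  | i+1 => ⟨(cov R (stt i).2).1, LinearMap.ker (cov R (stt i).2).2⟩

/-- free modules in the resolution -/
abbrev rX (i : ℕ) : Type := Fin (stt R N i).1 → R

/-- cover of syzygy -/
noncomputable def rp (i : ℕ) : rX R N (i+1) →ₗ[R] (stt R N i).2 := (cov R (stt R N i).2).2

/-- differential -/
noncomputable def rd (i : ℕ) : rX R N (i+1) →ₗ[R] rX R N i := (stt R N i).2.subtype ∘ₗ rp R N i

/-- augmentation -/
noncomputable def raug : rX R N 0 →ₗ[R] N := (cov R N).2

theorem raug_surj : Function.Surjective (raug R N) := cov_surj R N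

theorem range_rd (i : ℕ) : LinearMap.range (rd R N i) = (stt R N i).2 := by
  have : LinearMap.range (rp R N i) = ⊤ := LinearMap.range_eq_top.2 (cov_surj R _)
  rw [rd, LinearMap.range_comp, this, Submodule.map_top, Submodule.range_subtype]

theorem rd_exact (i : ℕ) : Function.Exact (rd R N (i+1)) (rd R N i) := by
  rw [LinearMap.exact_iff, range_rd, rd, LinearMap.ker_comp, Submodule.ker_subtype]
  rfl

theorem raug_exact : Function.Exact (rd R N 0) (raug R N) := by
  rw [LinearMap.exact_iff, range_rd]
  rfl

theorem rd_comp (i : ℕ) : rd R N i ∘ₗ rd R N (i+1) = 0 :=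
  (rd_exact R N i).linearMap_comp_eq_zero

/-- complex -/
noncomputable def rC : ChainComplex (ModuleCat.{0} R) ℕ :=
  ChainComplex.of (fun i => ModuleCat.of R (rX R N i)) (fun i => ModuleCat.ofHom (rd R N i))
    (fun i => by rw [← ModuleCat.ofHom_comp, rd_comp]; rfl)

theorem rC_d (i : ℕ) : (rC R N).d (i+1) i = ModuleCat.ofHom (rd R N i) := by
  unfold rC
  simp [ChainComplex.of]

theorem rC_exactAt (n : ℕ) : (rC R N).ExactAt (n+1) := by
  rw [HomologicalComplex.exactAt_iff' _ (n + 1 + 1) (n + 1) n (by simp) (by simp)]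
  rw [ShortComplex.ShortExact.moduleCat_exact_iff_function_exact]
  change Function.Exact ((rC R N).d (n+1+1) (n+1)) ((rC R N).d (n+1) n)
  rw [rC_d, rC_d]
  exact rd_exact R N n

theorem rC_aug : (rC R N).d 1 0 ≫ (ModuleCat.ofHom (raug R N) : (rC R N).X 0 ⟶ ModuleCat.of R N) = 0 := by
  rw [rC_d]
  ext x
  exact (raug_exact R N).apply_apply_eq_zero x

/-- the resolution -/
noncomputable def rRes : ProjectiveResolution (ModuleCat.of R N) where
  complex := rC R N
  projective i := by
    change Projective (ModuleCat.of R (rX R N i))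
    infer_instance
  π := (ChainComplex.toSingle₀Equiv _ _).symm ⟨ModuleCat.ofHom (raug R N), rC_aug R N⟩
  quasiIso := ⟨fun n => by
    cases n
    · rw [ChainComplex.quasiIsoAt₀_iff, ShortComplex.quasiIso_iff_of_zeros']
      · refine (ShortComplex.exact_and_epi_g_iff_of_iso (S₂ := ShortComplex.mk _ _ (rC_aug R N)) ?_).2
          ⟨?_, ?_⟩
        · exact ShortComplex.isoMk (Iso.refl _) (Iso.refl _) (Iso.refl _)
            (by simp [HomologicalComplex.shortComplexFunctor'])
            ((Category.id_comp _).trans (Eq.trans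
              (ChainComplex.toSingle₀Equiv_symm_apply_f_zero (C := rC R N)
                (X := ModuleCat.of R N) (ModuleCat.ofHom (raug R N)) (rC_aug R N)).symm (Category.comp_id _).symm))
        · rw [ShortComplex.ShortExact.moduleCat_exact_iff_function_exact]
          change Function.Exact ((rC R N).d 1 0) (raug R N)
          rw [rC_d]
          exact raug_exact R N
        · exact (ModuleCat.epi_iff_surjective _).2 (raug_surj R N)
      all_goals rfl
    · rw [quasiIsoAt_iff_exactAt']
      · apply rC_exactAt
      · apply ChainComplex.exactAt_succ_single_obj⟩

theorem exT_of_torVanish (M : Type) [AddCommGroup M] [Module R M] (i : ℕ)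
    (h : TorVanish R M N (i+1)) : ExT M (rd R N (i+1)) (rd R N i) := by
  have h1 : Limits.IsZero (((Tor (ModuleCat R) (i+1)).obj (ModuleCat.of R M)).obj (ModuleCat.of R N)) :=
    ModuleCat.isZero_of_iff_subsingleton.2 h
  have h2 := h1.of_iso ((rRes R N).isoLeftDerivedObj
    ((MonoidalCategory.tensoringLeft (ModuleCat R)).obj (ModuleCat.of R M)) (i+1)).symm
  have h3 := (HomologicalComplex.exactAt_iff_isZero_homology _ _).2 h2
  rw [HomologicalComplex.exactAt_iff' _ (i + 1 + 1) (i + 1) i (by simp) (by simp)] at h3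
  rw [ShortComplex.moduleCat_exact_iff] at h3
  intro z hz
  obtain ⟨y, hy⟩ := h3 z (by
    change (MonoidalCategory.whiskerLeft (ModuleCat.of R M) ((rC R N).d (i+1) i)) z = 0
    rw [rC_d]
    exact hz)
  refine ⟨y, ?_⟩
  change (MonoidalCategory.whiskerLeft (ModuleCat.of R M) ((rC R N).d (i+1+1) (i+1))) y = z at hy
  rw [rC_d] at hy
  exact hy

theorem extVanish_of (Y : ModuleCat.{0} R) (i : ℕ)
    (h : ∃ ρ : rX R N i →ₗ[R] rX R N (i+1), rd R N i ∘ₗ ρ ∘ₗ rd R N i = rd R N i) :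
    ExtVanish R N Y (i+1) := by
  obtain ⟨ρ, hρ⟩ := h
  obtain ⟨σ, hσ⟩ := regular_succ (rd_exact R N i) ρ hρ
  refine ModuleCat.subsingleton_of_isZero (Limits.IsZero.of_iso ?_ ((rRes R N).isoExt (i+1) Y))
  rw [← HomologicalComplex.exactAt_iff_isZero_homology,
    HomologicalComplex.exactAt_iff' _ i (i + 1) (i+1+1) (by simp) (by simp),
    ShortComplex.moduleCat_exact_iff]
  intro (x : (rC R N).X (i+1) ⟶ Y) hx
  change (rC R N).d (i+1+1) (i+1) ≫ x = 0 at hx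
  rw [rC_d] at hx
  refine ⟨(ModuleCat.ofHom ρ : (rC R N).X i ⟶ (rC R N).X (i+1)) ≫ x, ?_⟩
  change (rC R N).d (i+1) i ≫ (ModuleCat.ofHom ρ : (rC R N).X i ⟶ (rC R N).X (i+1)) ≫ x = x
  rw [rC_d]
  ext (b : rX R N (i+1))
  have h1 := hσ b
  have h2 : x.hom (rd R N (i+1) (σ b)) = 0 := ConcreteCategory.congr_hom hx (σ b)
  change x.hom (ρ (rd R N i b)) = x.hom b
  conv_rhs => rw [h1]
  exact ((map_add x.hom _ _).trans (by rw [h2, add_zero])).symm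

end UlrichRes

theorem statement1 (R : Type) [CommRing R] [IsNoetherianRing R] [IsLocalRing R]
    (M : Type) [AddCommGroup M] [Module R M] [Module.Finite R M]
    (s : ℕ) (hM : IsUlrich R M s)
    (N : Type) [AddCommGroup N] [Module R N] [Module.Finite R N]
    (n : ℕ) (hn : 1 ≤ n)
    (hvan : ∀ i : ℕ, n ≤ i → i ≤ n + s → TorVanish R M N i) :
    ProjDimFinite R N ∧ ProjDimLT R N (n + s) := by
  suffices h : ProjDimLT R N (n + s) from ⟨⟨_, h⟩, h⟩
  obtain ⟨-, -, -, rs, hlen, -, hreg, hmax⟩ := hM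
  obtain ⟨n, rfl⟩ : ∃ k, n = k + 1 := ⟨n - 1, by omega⟩
  have h1 := ExT.seq (rX R N) (rd R N) (rd_comp R N) rs n M hreg.toIsWeaklyRegular (by
    intro i hi1 hi2
    exact exT_of_torVanish R N M i (hvan (i+1) (by omega) (by omega)))
  have : Nontrivial (M ⧸ (Ideal.ofList rs • ⊤ : Submodule R M)) :=
    Submodule.Quotient.nontrivial_iff.2 hreg.top_ne_smul.symm
  have h2 := h1.residue (by
    intro x hx l
    obtain ⟨m, rfl⟩ := Submodule.Quotient.mk_surjective _ l
    rw [← Submodule.Quotient.mk_smul, Submodule.Quotient.mk_eq_zero, ← hmax]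
    exact Submodule.smul_mem_smul hx trivial)
  have h3 : ∀ j, ∃ ρ : rX R N (n + rs.length + j) →ₗ[R] rX R N (n + rs.length + j +1),
      rd R N (n + rs.length + j) ∘ₗ ρ ∘ₗ rd R N (n + rs.length + j) = rd R N (n + rs.length + j) := by
    intro j
    induction j with
    | zero => exact regular_of_exT (rd_exact R N _) h2
    | succ j ih => exact regular_succ' (rd_exact R N _) ih
  intro Y i hi
  obtain ⟨j, rfl⟩ : ∃ j, i = n + rs.length + j + 1 := ⟨i - (n + rs.length + 1), by omega⟩
  exact extVanish_of R N Y _ (h3 j)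
end

section
/- Let (R, m, k) be a commutative Noetherian local ring and let M be an Ulrich R-module of dimension s. If N is a finitely generated R-module and there exists an integer n ≥ 1 with n + s ≥ depth_R N such that Ext_R^i(M, N) = 0 for all n ≤ i ≤ n+s, then N has finite injective dimension over R. -/
open CategoryTheory IsLocalRing

namespace Ulr

variable {R : Type} [CommRing R]

/-- `Ext^i(X,N)=0` with the derived category version of `Ext`. -/
def V (R : Type) [CommRing R] (X N : Type) [AddCommGroup X] [Module R X] [AddCommGroup N] [Module R N] (i : ℕ) : Prop :=
  Subsingleton (Abelian.Ext (ModuleCat.of R X) (ModuleCat.of R N) i)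

variable {X N A B C : Type} [AddCommGroup X] [Module R X] [AddCommGroup N] [Module R N]
  [AddCommGroup A] [Module R A] [AddCommGroup B] [Module R B] [AddCommGroup C] [Module R C]

theorem V_iff {i : ℕ} : V R X N i ↔ ∀ x : Abelian.Ext (ModuleCat.of R X) (ModuleCat.of R N) i, x = 0 :=
  ⟨fun h x => @Subsingleton.elim _ h _ _, fun h => ⟨fun a b => by rw [h a, h b]⟩⟩

/-- short complex -/
noncomputable abbrev sc (f : A →ₗ[R] B) (g : B →ₗ[R] C) (h : Function.Exact f g) :
    ShortComplex (ModuleCat R) :=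
  ⟨ModuleCat.ofHom f, ModuleCat.ofHom g, by ext x; simpa using h.apply_apply_eq_zero x⟩

theorem sc_exact {f : A →ₗ[R] B} {g : B →ₗ[R] C} (h : Function.Exact f g)
    (hf : Function.Injective f) (hg : Function.Surjective g) : (sc f g h).ShortExact :=
  ModuleCat.shortComplex_shortExact _ h hf hg

section les
variable {f : A →ₗ[R] B} {g : B →ₗ[R] C} (h : Function.Exact f g)
    (hf : Function.Injective f) (hg : Function.Surjective g) {i : ℕ}
include h hf hg

theorem V_left_mid (h1 : V R A N i) (h3 : V R C N i) : V R B N i := by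
  rw [V_iff] at *
  intro x
  obtain ⟨y, rfl⟩ := Abelian.Ext.contravariant_sequence_exact₂ (sc_exact h hf hg) _ x (h1 _)
  rw [show y = 0 from h3 y]; simp

theorem V_left_three (h1 : V R A N i) (h3 : V R B N (i+1)) : V R C N (i+1) := by
  rw [V_iff] at *
  intro x
  obtain ⟨y, rfl⟩ := Abelian.Ext.contravariant_sequence_exact₃ (sc_exact h hf hg) _ x (h3 _) (by omega : 1 + i = _)
  rw [show y = 0 from h1 y]; simp

theorem V_left_one (h1 : V R B N i) (h3 : V R C N (i+1)) : V R A N i := by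
  rw [V_iff] at *
  intro x
  obtain ⟨y, rfl⟩ := Abelian.Ext.contravariant_sequence_exact₁ (sc_exact h hf hg) _ x (by omega : 1 + i = i + 1) (h3 _)
  rw [show y = 0 from h1 y]; simp

theorem V_right_mid (h1 : V R X A i) (h3 : V R X C i) : V R X B i := by
  rw [V_iff] at *
  intro x
  obtain ⟨y, rfl⟩ := Abelian.Ext.covariant_sequence_exact₂ _ (sc_exact h hf hg) x (h3 _)
  rw [show y = 0 from h1 y]; simp

theorem V_right_one (h1 : V R X B (i+1)) (h3 : V R X C i) : V R X A (i+1) := by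
  rw [V_iff] at *
  intro x
  obtain ⟨y, rfl⟩ := Abelian.Ext.covariant_sequence_exact₁ _ (sc_exact h hf hg) x (h1 _) rfl
  rw [show y = 0 from h3 y]; simp

theorem V_right_three (h1 : V R X B i) (h3 : V R X A (i+1)) : V R X C i := by
  rw [V_iff] at *
  intro x
  obtain ⟨y, rfl⟩ := Abelian.Ext.covariant_sequence_exact₃ _ (sc_exact h hf hg) x rfl (h3 _)
  rw [show y = 0 from h1 y]; simp

end les

theorem V_zero : V R X N 0 ↔ ∀ f : X →ₗ[R] N, f = 0 := by
  unfold V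
  rw [Abelian.Ext.homEquiv₀.subsingleton_congr]
  constructor
  · intro h f
    have := @Subsingleton.elim _ h (ModuleCat.ofHom f) 0
    simpa using congrArg ModuleCat.Hom.hom this
  · intro h
    refine ⟨fun a b => ?_⟩
    ext x
    rw [h a.hom, h b.hom]

theorem V_right_one_zero {f : A →ₗ[R] B} (hf : Function.Injective f) (h1 : V R X B 0) : V R X A 0 := by
  rw [V_zero] at *
  intro φ
  ext x
  apply hf
  simpa using LinearMap.congr_fun (h1 (f ∘ₗ φ)) x

/-- retract -/
theorem V_left_retract (u : A →ₗ[R] B) (v : B →ₗ[R] A) (huv : v ∘ₗ u = LinearMap.id) {i : ℕ}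
    (h : V R B N i) : V R A N i := by
  rw [V_iff] at *
  intro x
  have h1 := h ((Abelian.Ext.mk₀ (ModuleCat.ofHom v)).comp x (zero_add i))
  have h2 : (Abelian.Ext.mk₀ (ModuleCat.ofHom u)).comp
    ((Abelian.Ext.mk₀ (ModuleCat.ofHom v)).comp x (zero_add i)) (zero_add i) = x := by
    rw [Abelian.Ext.mk₀_comp_mk₀_assoc, ← ModuleCat.ofHom_comp, huv, ModuleCat.ofHom_id, Abelian.Ext.mk₀_id_comp]
  rw [← h2, h1]; simp

theorem V_right_retract (u : A →ₗ[R] B) (v : B →ₗ[R] A) (huv : v ∘ₗ u = LinearMap.id) {i : ℕ}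
    (h : V R X B i) : V R X A i := by
  rw [V_iff] at *
  intro x
  have h1 := h (x.comp (Abelian.Ext.mk₀ (ModuleCat.ofHom u)) (add_zero i))
  have h2 : (x.comp (Abelian.Ext.mk₀ (ModuleCat.ofHom u)) (add_zero i)).comp
    (Abelian.Ext.mk₀ (ModuleCat.ofHom v)) (add_zero i) = x := by
    rw [Abelian.Ext.comp_assoc_of_third_deg_zero, Abelian.Ext.mk₀_comp_mk₀, ← ModuleCat.ofHom_comp, huv, ModuleCat.ofHom_id, Abelian.Ext.comp_mk₀_id]
  rw [← h2, h1]; simp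

theorem V_left_equiv (e : A ≃ₗ[R] B) {i : ℕ} (h : V R A N i) : V R B N i :=
  V_left_retract e.symm.toLinearMap e.toLinearMap (by ext; simp) h

theorem V_right_equiv (e : A ≃ₗ[R] B) {i : ℕ} (h : V R X A i) : V R X B i :=
  V_right_retract e.symm.toLinearMap e.toLinearMap (by ext; simp) h

theorem V_left_subsingleton [Subsingleton A] (i : ℕ) : V R A N i := by
  rw [V_iff]; intro x
  have : (Abelian.Ext.mk₀ (𝟙 (ModuleCat.of R A))).comp x (zero_add i) = x := by simp
  rw [← this, show 𝟙 (ModuleCat.of R A) = 0 by ext x; exact Subsingleton.elim (α := A) _ _]; simp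

theorem V_right_subsingleton [Subsingleton A] (i : ℕ) : V R X A i := by
  rw [V_iff]; intro x
  have : x.comp (Abelian.Ext.mk₀ (𝟙 (ModuleCat.of R A))) (add_zero i) = x := by simp
  rw [← this, show 𝟙 (ModuleCat.of R A) = 0 by ext x; exact Subsingleton.elim (α := A) _ _]; simp

/-- multiplication by `r` on `X` as composition -/
theorem smul_left (r : R) {i : ℕ} (x : Abelian.Ext (ModuleCat.of R X) (ModuleCat.of R N) i) :
    (Abelian.Ext.mk₀ (ModuleCat.ofHom (LinearMap.lsmul R X r))).comp x (zero_add i) = r • x := by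
  have : ModuleCat.ofHom (LinearMap.lsmul R X r) = r • 𝟙 (ModuleCat.of R X) := by
    ext x; simp
  rw [this, Abelian.Ext.mk₀_smul, Abelian.Ext.smul_comp]; simp

theorem smul_right (r : R) {i : ℕ} (x : Abelian.Ext (ModuleCat.of R X) (ModuleCat.of R N) i) :
    x.comp (Abelian.Ext.mk₀ (ModuleCat.ofHom (LinearMap.lsmul R N r))) (add_zero i) = r • x := by
  have : ModuleCat.ofHom (LinearMap.lsmul R N r) = r • 𝟙 (ModuleCat.of R N) := by
    ext x; simp
  rw [this, Abelian.Ext.mk₀_smul, Abelian.Ext.comp_smul]; simp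

/-- `r` bijective on `Y`, nilpotent on `N`. -/
theorem V_of_bij_nilp (r : R) (k : ℕ) (hX : Function.Bijective (fun x : X => r • x))
    (hN : ∀ y : N, r ^ k • y = 0) (i : ℕ) : V R X N i := by
  rw [V_iff]; intro x
  have hb : Function.Bijective (fun x : X => r ^ k • x) := by
    have : (fun x : X => r ^ k • x) = (fun x : X => r • x)^[k] := by
      rw [smul_iterate]
    rw [this]; exact hX.iterate k
  let e : X ≃ₗ[R] X := LinearEquiv.ofBijective (LinearMap.lsmul R X (r^k)) hb
  have h0 : r ^ k • x = 0 := by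
    rw [← smul_right, show LinearMap.lsmul R N (r^k) = 0 by ext y; simpa using hN y]
    simp
  rw [← smul_left] at h0
  have h2 : (Abelian.Ext.mk₀ (ModuleCat.ofHom e.symm.toLinearMap)).comp
    ((Abelian.Ext.mk₀ (ModuleCat.ofHom (LinearMap.lsmul R X (r^k)))).comp x (zero_add i)) (zero_add i) = x := by
    rw [Abelian.Ext.mk₀_comp_mk₀_assoc, ← ModuleCat.ofHom_comp,
      show LinearMap.lsmul R X (r^k) ∘ₗ e.symm.toLinearMap = LinearMap.id by
        ext y; exact e.apply_symm_apply y, ModuleCat.ofHom_id, Abelian.Ext.mk₀_id_comp]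
  rw [← h2, h0]; simp

/-- If `r` kills `X`, is regular on `A` with quotient `C`, `V X C i`, then `V X A i`. -/
theorem V_of_kill (r : R) {g : A →ₗ[R] C} (hr : Function.Injective (LinearMap.lsmul R A r))
    (h : Function.Exact (LinearMap.lsmul R A r) g) (hg : Function.Surjective g)
    (hX : ∀ x : X, r • x = 0) {i : ℕ} (hV : V R X C i) : V R X A i := by
  rw [V_iff] at *; intro x
  obtain ⟨y, hy⟩ := Abelian.Ext.covariant_sequence_exact₂ _ (sc_exact h hr hg) x (hV _)
  rw [← hy]
  have := smul_right r (X := X) (N := A) y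
  have h2 := smul_left r (X := X) (N := A) y
  rw [show LinearMap.lsmul R X r = 0 by ext y; simpa using hX y] at h2
  refine this.trans (h2.symm.trans ?_)
  simp

/-- Nakayama : `r ∈ jacobson` regular on `A`. -/
theorem V_of_nak [IsLocalRing R] [IsNoetherianRing R] [Module.Finite R A] [Module.Finite R N]
    (r : R) (hrm : r ∈ maximalIdeal R) {g : A →ₗ[R] C} (hr : Function.Injective (LinearMap.lsmul R A r))
    (h : Function.Exact (LinearMap.lsmul R A r) g) (hg : Function.Surjective g)
    {i : ℕ} (hV : V R C N (i+1)) : V R A N i := by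
  rw [V_iff] at hV
  have : Module.Finite R (Abelian.Ext (ModuleCat.of R A) (ModuleCat.of R N) i) := inferInstance
  have key : (⊤ : Submodule R (Abelian.Ext (ModuleCat.of R A) (ModuleCat.of R N) i)) ≤ maximalIdeal R • ⊤ := by
    rintro x -
    obtain ⟨y, rfl⟩ := Abelian.Ext.contravariant_sequence_exact₁ (sc_exact h hr hg) _ x (by omega : 1 + i = i + 1) (hV _)
    have := smul_left r (X := A) (N := N) y
    refine (congrArg (· ∈ (maximalIdeal R • ⊤ : Submodule R (Abelian.Ext (ModuleCat.of R A) (ModuleCat.of R N) i))) this).mpr ?_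
    exact Submodule.smul_mem_smul hrm trivial
  have := Submodule.eq_bot_of_le_smul_of_le_jacobson_bot _ _ (Module.Finite.fg_top) key (maximalIdeal_le_jacobson _)
  rw [V_iff]; intro x
  have h2 : x ∈ (⊤ : Submodule R (Abelian.Ext (ModuleCat.of R A) (ModuleCat.of R N) i)) := trivial
  rw [this] at h2; simpa using h2

theorem V_succ_proj (P : ProjectiveResolution (ModuleCat.of R X)) (i : ℕ) :
    V R X N (i+1) ↔ ∀ f : P.complex.X (i+1) →ₗ[R] N, f ∘ₗ (P.complex.d (i+2) (i+1)).hom = 0 →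
      ∃ g : P.complex.X i →ₗ[R] N, g ∘ₗ (P.complex.d (i+1) i).hom = f := by
  rw [V_iff]
  constructor
  · intro h f hf
    have hf' : P.complex.d (i+2) (i+1) ≫ (ModuleCat.ofHom f : _ ⟶ ModuleCat.of R N) = 0 := by
      ext x; exact LinearMap.congr_fun hf x
    obtain ⟨g, hg⟩ := (P.extMk_eq_zero_iff _ (i+2) rfl hf' i rfl).1 (h _)
    exact ⟨g.hom, congrArg ModuleCat.Hom.hom hg⟩
  · intro h x
    obtain ⟨f, hf, rfl⟩ := P.extMk_surjective x (i+2) rfl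
    obtain ⟨g, hg⟩ := h f.hom (congrArg ModuleCat.Hom.hom hf)
    rw [P.extMk_eq_zero_iff _ (i+2) rfl hf i rfl]
    exact ⟨ModuleCat.ofHom g, by ext x; exact LinearMap.congr_fun hg x⟩

theorem V_succ_inj (P : InjectiveResolution (ModuleCat.of R N)) (i : ℕ) :
    V R X N (i+1) ↔ ∀ f : X →ₗ[R] P.cocomplex.X (i+1), (P.cocomplex.d (i+1) (i+2)).hom ∘ₗ f = 0 →
      ∃ g : X →ₗ[R] P.cocomplex.X i, (P.cocomplex.d i (i+1)).hom ∘ₗ g = f := by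
  rw [V_iff]
  constructor
  · intro h f hf
    have hf' : (ModuleCat.ofHom f : ModuleCat.of R X ⟶ _) ≫ P.cocomplex.d (i+1) (i+2) = 0 := by
      ext x; exact LinearMap.congr_fun hf x
    obtain ⟨g, hg⟩ := (P.extMk_eq_zero_iff _ (i+2) rfl hf' i rfl).1 (h _)
    exact ⟨g.hom, congrArg ModuleCat.Hom.hom hg⟩
  · intro h x
    obtain ⟨f, hf, rfl⟩ := P.extMk_surjective x (i+2) rfl
    obtain ⟨g, hg⟩ := h f.hom (congrArg ModuleCat.Hom.hom hf)
    rw [P.extMk_eq_zero_iff _ (i+2) rfl hf i rfl]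
    exact ⟨ModuleCat.ofHom g, by ext x; exact LinearMap.congr_fun hg x⟩

theorem V_pi {ι : Type} (Nf : ι → Type) [∀ j, AddCommGroup (Nf j)] [∀ j, Module R (Nf j)] (i : ℕ)
    (h : ∀ j, V R X (Nf j) i) : V R X (∀ j, Nf j) i := by
  cases i with
  | zero =>
    simp only [V_zero] at *
    intro f
    ext x j
    exact LinearMap.congr_fun (h j (LinearMap.proj j ∘ₗ f)) x
  | succ i =>
    obtain ⟨P⟩ := HasProjectiveResolution.out (Z := ModuleCat.of R X)
    simp only [V_succ_proj P] at *
    intro f hf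
    choose g hg using fun j => h j (LinearMap.proj j ∘ₗ f) (by
      rw [LinearMap.comp_assoc, hf, LinearMap.comp_zero])
    refine ⟨LinearMap.pi g, ?_⟩
    ext x j
    exact LinearMap.congr_fun (hg j) x

end Ulr

namespace Ulr

variable {R : Type} [CommRing R]
variable {X N A B C : Type} [AddCommGroup X] [Module R X] [AddCommGroup N] [Module R N]
  [AddCommGroup A] [Module R A] [AddCommGroup B] [Module R B] [AddCommGroup C] [Module R C]

theorem bridge (i : ℕ) : ExtVanish R X N (i+1) ↔ V R X N (i+1) := by
  obtain ⟨P⟩ := HasProjectiveResolution.out (Z := ModuleCat.of R X)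
  rw [V_succ_proj P]
  unfold ExtVanish
  rw [← ModuleCat.isZero_iff_subsingleton, (P.isoExt (R := R) (i+1) (ModuleCat.of R N)).isZero_iff,
    ← HomologicalComplex.exactAt_iff_isZero_homology,
    HomologicalComplex.exactAt_iff' _ i (i+1) (i+2) (by simp) (by simp),
    ShortComplex.moduleCat_exact_iff]
  constructor
  · intro h f hf
    obtain ⟨g, hg⟩ := h (ModuleCat.ofHom f : P.complex.X (i+1) ⟶ ModuleCat.of R N) (by
      simp only [HomologicalComplex.shortComplexFunctor'_obj_g, ChainComplex.linearYonedaObj_d]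
      change P.complex.d (i+2) (i+1) ≫ (ModuleCat.ofHom f : P.complex.X (i+1) ⟶ ModuleCat.of R N) = 0
      ext x; exact LinearMap.congr_fun hf x)
    simp only [HomologicalComplex.shortComplexFunctor'_obj_f, ChainComplex.linearYonedaObj_d] at hg
    replace hg : P.complex.d (i+1) i ≫ (g : P.complex.X i ⟶ ModuleCat.of R N) = ModuleCat.ofHom f := hg
    exact ⟨ModuleCat.Hom.hom (g : P.complex.X i ⟶ ModuleCat.of R N), congrArg ModuleCat.Hom.hom hg⟩
  · intro h f hf
    simp only [HomologicalComplex.shortComplexFunctor'_obj_g, ChainComplex.linearYonedaObj_d] at hf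
    replace hf : P.complex.d (i+2) (i+1) ≫ (f : P.complex.X (i+1) ⟶ ModuleCat.of R N) = 0 := hf
    obtain ⟨g, hg⟩ := h (ModuleCat.Hom.hom (f : P.complex.X (i+1) ⟶ ModuleCat.of R N)) (congrArg ModuleCat.Hom.hom hf)
    refine ⟨(ModuleCat.ofHom g : P.complex.X i ⟶ ModuleCat.of R N), ?_⟩
    simp only [HomologicalComplex.shortComplexFunctor'_obj_f, ChainComplex.linearYonedaObj_d]
    change P.complex.d (i+1) i ≫ (ModuleCat.ofHom g : P.complex.X i ⟶ ModuleCat.of R N) = (f : P.complex.X (i+1) ⟶ ModuleCat.of R N)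
    ext x; exact LinearMap.congr_fun hg x

/-- Noetherian induction on f.g. modules over a local ring -/
theorem dev [IsLocalRing R] [IsNoetherianRing R]
    {Q : (A : Type) → [AddCommGroup A] → [Module R A] → [Module.Finite R A] → Prop}
    (subs : (N : Type) → [AddCommGroup N] → [Module R N] → [Module.Finite R N] →
      [Subsingleton N] → Q N)
    (equiv : (N : Type) → [AddCommGroup N] → [Module R N] → [Module.Finite R N] →
      (N' : Type) → [AddCommGroup N'] → [Module R N'] → [Module.Finite R N'] →
      (N ≃ₗ[R] N') → Q N → Q N')
    (exact : (N₁ : Type) → [AddCommGroup N₁] → [Module R N₁] → [Module.Finite R N₁] →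
      (N₂ : Type) → [AddCommGroup N₂] → [Module R N₂] → [Module.Finite R N₂] →
      (N₃ : Type) → [AddCommGroup N₃] → [Module R N₃] → [Module.Finite R N₃] →
      (f : N₁ →ₗ[R] N₂) → (g : N₂ →ₗ[R] N₃) →
      Function.Injective f → Function.Surjective g → Function.Exact f g →
      Q N₁ → Q N₃ → Q N₂)
    (hk : Q (R ⧸ maximalIdeal R))
    (hp : ∀ (A B : Type) [AddCommGroup A] [Module R A] [Module.Finite R A]
      [AddCommGroup B] [Module R B] [Module.Finite R B] (x : R), x ∈ maximalIdeal R →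
      Function.Injective (LinearMap.lsmul R A x) → ∀ (g : A →ₗ[R] B), Function.Surjective g →
      Function.Exact (LinearMap.lsmul R A x) g → Q B → Q A)
    (A : Type) [AddCommGroup A] [Module R A] [hA : Module.Finite R A] : Q A := by
  suffices H : ∀ (I : Ideal R) (A : Type) [AddCommGroup A] [Module R A] [Module.Finite R A],
      (∀ r ∈ I, ∀ a : A, r • a = 0) → Q A from H ⊥ A (by simp)
  intro I
  induction I using WellFoundedGT.induction with
  | ind I IH =>
  intro A _ _ hA hI
  revert hI
  refine IsNoetherianRing.induction_on_isQuotientEquivQuotientPrime R hA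
    (motive := fun N _ _ _ => (∀ r ∈ I, ∀ a : N, r • a = 0) → Q N) ?_ ?_ ?_
  · intro N _ _ _ _ _; exact subs N
  · intro N _ _ _ p e hN
    by_cases hpm : p.1 = maximalIdeal R
    · refine equiv _ _ (Submodule.quotEquivOfEq _ _ hpm.symm ≪≫ₗ e.symm) hk
    · have hle : p.1 ≤ maximalIdeal R := le_maximalIdeal p.2.ne_top
      obtain ⟨x, hx, hxp⟩ := SetLike.exists_of_lt (lt_of_le_of_ne hle hpm)
      refine equiv _ _ e.symm ?_
      have hIp : I ≤ p.1 := by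
        intro r hr
        have := hN r hr (e.symm (Submodule.Quotient.mk 1))
        rw [← map_smul, ← Submodule.Quotient.mk_smul, LinearEquiv.map_eq_zero_iff, Submodule.Quotient.mk_eq_zero] at this
        simpa using this
      let J : Ideal R := p.1 ⊔ Ideal.span {x}
      have hpJ : p.1 ≤ J := le_sup_left
      have hxJ : x ∈ J := Ideal.mem_sup_right (Ideal.mem_span_singleton_self x)
      refine hp (R ⧸ p.1) (R ⧸ J) x hx ?_ (Submodule.factor hpJ) (Submodule.factor_surjective hpJ) ?_ ?_
      · rw [injective_iff_map_eq_zero]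
        intro a ha
        obtain ⟨a, rfl⟩ := Submodule.Quotient.mk_surjective _ a
        rw [LinearMap.lsmul_apply, ← Submodule.Quotient.mk_smul, Submodule.Quotient.mk_eq_zero] at ha
        rw [Submodule.Quotient.mk_eq_zero]
        exact (p.2.mem_or_mem ha).resolve_left hxp
      · intro a
        obtain ⟨a, rfl⟩ := Submodule.Quotient.mk_surjective _ a
        constructor
        · intro h
          replace h : a ∈ J := by
            rw [← Submodule.Quotient.mk_eq_zero]; exact h
          obtain ⟨b, hb, c, hc, rfl⟩ := Submodule.mem_sup.1 h
          obtain ⟨d, rfl⟩ := Ideal.mem_span_singleton'.1 hc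
          refine ⟨Submodule.Quotient.mk d, ?_⟩
          rw [LinearMap.lsmul_apply, ← Submodule.Quotient.mk_smul, Submodule.Quotient.mk_add, (Submodule.Quotient.mk_eq_zero _).2 hb, zero_add, smul_eq_mul, mul_comm]
        · rintro ⟨b, hb⟩
          obtain ⟨b, rfl⟩ := Submodule.Quotient.mk_surjective _ b
          rw [← hb]
          change Submodule.Quotient.mk (x • b) = (0 : R ⧸ J)
          rw [Submodule.Quotient.mk_eq_zero]
          exact Ideal.mul_mem_right _ _ hxJ
      · refine IH J (lt_of_le_of_ne (hIp.trans hpJ) ?_) _ ?_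
        · rintro h; exact hxp (hIp (h ▸ hxJ))
        · intro r hr a
          obtain ⟨a, rfl⟩ := Submodule.Quotient.mk_surjective _ a
          rw [← Submodule.Quotient.mk_smul, Submodule.Quotient.mk_eq_zero]
          exact Ideal.mul_mem_right _ _ hr
  · intro N₁ _ _ _ N₂ _ _ _ N₃ _ _ _ f g hf hg hfg h1 h3 hI
    refine exact N₁ N₂ N₃ f g hf hg hfg (h1 ?_) (h3 ?_)
    · intro r hr a; apply hf; rw [map_smul, hI r hr, map_zero]
    · intro r hr a; obtain ⟨a, rfl⟩ := hg a; rw [← map_smul, hI r hr, map_zero]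

/-- Step 2a -/
theorem V_fg [IsLocalRing R] [IsNoetherianRing R] [Module.Finite R N] (e : ℕ)
    (h : ∀ i, e ≤ i → V R (R ⧸ maximalIdeal R) N i) (A : Type) [AddCommGroup A] [Module R A]
    [Module.Finite R A] : ∀ i, e ≤ i → V R A N i := by
  refine dev (R := R) (Q := fun A _ _ _ => ∀ i, e ≤ i → V R A N i) ?_ ?_ ?_ h ?_ A
  · intro A _ _ _ _ i _; exact V_left_subsingleton i
  · intro A _ _ _ B _ _ _ eq H i hi; exact V_left_equiv eq (H i hi)
  · intro A _ _ _ B _ _ _ C _ _ _ f g hf hg hfg h1 h3 i hi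
    exact V_left_mid hfg hf hg (h1 i hi) (h3 i hi)
  · intro A B _ _ _ _ _ _ x hx hinj g hg hfg H i hi
    exact V_of_nak x hx hinj hfg hg (H (i+1) (by omega))

end Ulr

namespace Ulr

variable {R : Type} [CommRing R]
variable {X N A B C : Type} [AddCommGroup X] [Module R X] [AddCommGroup N] [Module R N]
  [AddCommGroup A] [Module R A] [AddCommGroup B] [Module R B] [AddCommGroup C] [Module R C]

theorem V_inj [hN : Module.Injective R N] (i : ℕ) : V R X N (i+1) := by
  rw [V_iff]; intro x
  have : Injective (ModuleCat.of R N) := (Module.injective_iff_injective_object R N).1 hN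
  exact Abelian.Ext.eq_zero_of_injective x

theorem extend_of_V {f : A →ₗ[R] B} {g : B →ₗ[R] C} (h : Function.Exact f g)
    (hf : Function.Injective f) (hg : Function.Surjective g) (hV : V R C N 1) (φ : A →ₗ[R] N) :
    ∃ ψ : B →ₗ[R] N, ψ ∘ₗ f = φ := by
  rw [V_iff] at hV
  obtain ⟨y, hy⟩ := Abelian.Ext.contravariant_sequence_exact₁ (sc_exact h hf hg) _
    (Abelian.Ext.mk₀ (ModuleCat.ofHom φ)) (by omega : 1 + 0 = 1) (hV _)
  obtain ⟨ψ, rfl⟩ := Abelian.Ext.homEquiv₀.symm.surjective y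
  refine ⟨ψ.hom, ?_⟩
  rw [Abelian.Ext.homEquiv₀_symm_apply, Abelian.Ext.mk₀_comp_mk₀, Abelian.Ext.mk₀_bijective _ _ |>.1.eq_iff] at hy
  exact congrArg ModuleCat.Hom.hom hy

theorem injdim (e : ℕ) (N : Type) [AddCommGroup N] [Module R N]
    (h : ∀ I : Ideal R, ∀ i, e + 1 ≤ i → V R (R ⧸ I) N i) :
    ∀ (X : Type) [AddCommGroup X] [Module R X] (i), e + 1 ≤ i → V R X N i := by
  suffices H : HasInjectiveDimensionLT (ModuleCat.of R N) (e+1) by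
    intro X _ _ i hi
    rw [V_iff]; intro x
    exact x.eq_zero_of_hasInjectiveDimensionLT (e+1) hi
  induction e generalizing N with
  | zero =>
    rw [zero_add, ← injective_iff_hasInjectiveDimensionLT_one, ← Module.injective_iff_injective_object,
      ← Module.Baer.iff_injective]
    intro I φ
    obtain ⟨ψ, hψ⟩ := extend_of_V (f := Submodule.subtype I) (g := Submodule.mkQ I)
      (LinearMap.exact_subtype_mkQ I) (Submodule.subtype_injective I) (Submodule.mkQ_surjective I) (h I 1 le_rfl) φ
    exact ⟨ψ, fun x hx => LinearMap.congr_fun hψ ⟨x, hx⟩⟩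
  | succ e ih =>
    obtain ⟨P⟩ := EnoughInjectives.presentation (ModuleCat.of R N)
    have hinj : Function.Injective P.f.hom := (ModuleCat.mono_iff_injective P.f).1 P.mono
    let f : N →ₗ[R] P.J := P.f.hom
    have ex : Function.Exact f (LinearMap.range f).mkQ := LinearMap.exact_map_mkQ_range f
    have hJ : Module.Injective R P.J := (Module.injective_iff_injective_object R P.J).2 P.injective
    have := ih (P.J ⧸ LinearMap.range f) (fun I i hi => by
      obtain ⟨j, rfl⟩ : ∃ j, i = j + 1 := ⟨i - 1, by omega⟩
      exact V_right_three ex hinj (Submodule.mkQ_surjective _) (V_inj j) (h I _ (by omega)))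
    refine ((sc_exact ex hinj (Submodule.mkQ_surjective _)).hasInjectiveDimensionLT_X₃_iff e P.injective).1 this

open scoped Pointwise in
theorem quot_exact (r : R) : Function.Exact (LinearMap.lsmul R A r) (r • (⊤ : Submodule R A)).mkQ := by
  intro a
  rw [Submodule.mkQ_apply, Submodule.Quotient.mk_eq_zero, Submodule.mem_smul_pointwise_iff_exists]
  simp

theorem step0 (rs : List R) : ∀ (M : Type) [AddCommGroup M] [Module R M] (n : ℕ),
    RingTheory.Sequence.IsWeaklyRegular M rs → (∀ i, n ≤ i → i ≤ n + rs.length → V R M N i) →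
    V R (M ⧸ (Ideal.ofList rs • ⊤ : Submodule R M)) N (n + rs.length) := by
  induction rs with
  | nil =>
    intro M _ _ n _ h
    refine V_left_equiv (Submodule.quotEquivOfEqBot _ (by simp)).symm (h _ (by simp) (by simp))
  | cons r rs ih =>
    intro M _ _ n hreg h
    rw [RingTheory.Sequence.isWeaklyRegular_cons_iff] at hreg
    have := ih (QuotSMulTop r M) (n+1) hreg.2 (fun i hi hi2 => by
      obtain ⟨j, rfl⟩ : ∃ j, i = j + 1 := ⟨i - 1, by omega⟩
      refine V_left_three (quot_exact r) hreg.1 (Submodule.mkQ_surjective _) (h j ?_ ?_) (h _ ?_ ?_)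
      all_goals simp only [List.length_cons] at *; omega)
    have := V_left_equiv (Submodule.quotOfListConsSMulTopEquivQuotSMulTopInner M r rs).symm this
    rw [List.length_cons]
    convert this using 1
    omega

section loc
variable [IsLocalRing R]

/-- the residue field -/
abbrev κ (R : Type) [CommRing R] [IsLocalRing R] := R ⧸ maximalIdeal R

theorem V_kappa (M : Type) [AddCommGroup M] [Module R M]
    [hnt : Nontrivial (M ⧸ (maximalIdeal R • ⊤ : Submodule R M))] {i : ℕ}
    (h : V R (M ⧸ (maximalIdeal R • ⊤ : Submodule R M)) N i) : V R (κ R) N i := by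
  let _ : Field (κ R) := Ideal.Quotient.field _
  obtain ⟨w, hw⟩ := exists_ne (0 : M ⧸ (maximalIdeal R • ⊤ : Submodule R M))
  obtain ⟨v, hv⟩ := LinearMap.exists_leftInverse_of_injective (LinearMap.toSpanSingleton (κ R) _ w)
    (by rw [LinearMap.ker_toSpanSingleton]; exact hw)
  refine V_left_retract ((LinearMap.toSpanSingleton (κ R) _ w).restrictScalars R) (v.restrictScalars R) ?_ h
  apply LinearMap.ext
  intro x
  exact LinearMap.congr_fun hv x

theorem ann_kappa : Module.annihilator R (κ R) = maximalIdeal R := Ideal.annihilator_quotient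

theorem step1 [IsNoetherianRing R] (e : ℕ) : ∀ (N : Type) [AddCommGroup N] [Module R N] [Module.Finite R N]
    [Nontrivial N], (∀ i ≤ e, V R (κ R) N i) → ∃ rs : List R, (∀ x ∈ rs, x ∈ maximalIdeal R) ∧
      RingTheory.Sequence.IsRegular N rs ∧ rs.length = e + 1 := by
  induction e with
  | zero =>
    intro N _ _ _ _ h
    have h0 := V_zero.1 (h 0 le_rfl)
    obtain ⟨r, hr, hreg⟩ := (IsSMulRegular.subsingleton_linearMap_iff (R := R) (M := N) (N := κ R)).1
      ⟨fun a b => by rw [h0 a, h0 b]⟩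
    rw [ann_kappa] at hr
    have := nontrivial_quotSMulTop_of_mem_maximalIdeal N hr
    exact ⟨[r], by simpa using hr, RingTheory.Sequence.IsRegular.cons hreg (RingTheory.Sequence.IsRegular.nil _ _), rfl⟩
  | succ e ih =>
    intro N _ _ _ _ h
    have h0 := V_zero.1 (h 0 (by omega))
    obtain ⟨r, hr, hreg⟩ := (IsSMulRegular.subsingleton_linearMap_iff (R := R) (M := N) (N := κ R)).1
      ⟨fun a b => by rw [h0 a, h0 b]⟩
    rw [ann_kappa] at hr
    have := nontrivial_quotSMulTop_of_mem_maximalIdeal N hr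
    obtain ⟨rs, h1, h2, h3⟩ := ih (QuotSMulTop r N) (fun i hi =>
      V_right_three (quot_exact r) hreg (Submodule.mkQ_surjective _) (h i (by omega)) (h _ (by omega)))
    exact ⟨r :: rs, by simpa using ⟨hr, h1⟩, RingTheory.Sequence.IsRegular.cons hreg h2, by simp [h3]⟩

end loc

end Ulr

namespace Ulr

variable {R : Type} [CommRing R]
variable {X N A B C : Type} [AddCommGroup X] [Module R X] [AddCommGroup N] [Module R N]
  [AddCommGroup A] [Module R A] [AddCommGroup B] [Module R B] [AddCommGroup C] [Module R C]
  [IsLocalRing R]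

/-- completion -/
abbrev Nh (R : Type) [CommRing R] [IsLocalRing R] (N : Type) [AddCommGroup N] [Module R N] : Type :=
  AdicCompletion (maximalIdeal R) N

/-- `N → N^` -/
noncomputable abbrev ofh (R : Type) [CommRing R] [IsLocalRing R] (N : Type) [AddCommGroup N] [Module R N] :
    N →ₗ[R] Nh R N := AdicCompletion.of (maximalIdeal R) N

/-- completion of a map -/
noncomputable def mph (f : A →ₗ[R] B) : Nh R A →ₗ[R] Nh R B :=
  (AdicCompletion.map (maximalIdeal R) f).restrictScalars R

theorem mph_of (f : A →ₗ[R] B) (a : A) : mph f (ofh R A a) = ofh R B (f a) :=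
  AdicCompletion.map_of _ _ _

/-- cokernel of completion -/
abbrev Dh (R : Type) [CommRing R] [IsLocalRing R] (N : Type) [AddCommGroup N] [Module R N] : Type :=
  Nh R N ⧸ LinearMap.range (ofh R N)

/-- map on cokernels -/
noncomputable def dmap (f : A →ₗ[R] B) : Dh R A →ₗ[R] Dh R B :=
  Submodule.mapQ _ _ (mph f) (by
    rintro _ ⟨a, rfl⟩
    exact ⟨f a, (mph_of f a).symm⟩)

theorem dmap_mk (f : A →ₗ[R] B) (x : Nh R A) :
    dmap f (Submodule.Quotient.mk x) = Submodule.Quotient.mk (mph f x) := rfl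

section ex
variable [IsNoetherianRing R] [Module.Finite R A] [Module.Finite R B] [Module.Finite R C]
variable {f : A →ₗ[R] B} {g : B →ₗ[R] C} (h : Function.Exact f g)
    (hf : Function.Injective f) (hg : Function.Surjective g)

omit [IsNoetherianRing R] [Module.Finite R A] [Module.Finite R B] [Module.Finite R C] in
include hg in
theorem dmap_surj : Function.Surjective (dmap g) := by
  intro y
  obtain ⟨y, rfl⟩ := Submodule.Quotient.mk_surjective _ y
  obtain ⟨x, hx⟩ := AdicCompletion.map_surjective (maximalIdeal R) hg y
  exact ⟨Submodule.Quotient.mk x, congrArg Submodule.Quotient.mk hx⟩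

include h hf hg

theorem mph_exact : Function.Exact (mph f) (mph g) :=
  AdicCompletion.map_exact (I := maximalIdeal R) hf h hg

theorem dmap_exact : Function.Exact (dmap f) (dmap g) := by
  intro x
  obtain ⟨x, rfl⟩ := Submodule.Quotient.mk_surjective _ x
  constructor
  · intro hx
    rw [dmap_mk, Submodule.Quotient.mk_eq_zero] at hx
    obtain ⟨c, hc⟩ := hx
    obtain ⟨b, rfl⟩ := hg c
    have : mph g (x - ofh R B b) = 0 := by rw [map_sub, mph_of, hc, sub_self]
    obtain ⟨y, hy⟩ := (mph_exact h hf hg _).1 this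
    refine ⟨Submodule.Quotient.mk y, ?_⟩
    rw [dmap_mk, hy, Submodule.Quotient.mk_sub, sub_eq_self, Submodule.Quotient.mk_eq_zero]
    exact ⟨b, rfl⟩
  · rintro ⟨y, hy⟩
    obtain ⟨y, rfl⟩ := Submodule.Quotient.mk_surjective _ y
    rw [← hy, dmap_mk, dmap_mk, (mph_exact h hf hg).apply_apply_eq_zero, Submodule.Quotient.mk_zero]

theorem dmap_inj : Function.Injective (dmap f) := by
  rw [injective_iff_map_eq_zero]
  intro y hy
  obtain ⟨y, rfl⟩ := Submodule.Quotient.mk_surjective _ y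
  rw [dmap_mk, Submodule.Quotient.mk_eq_zero] at hy
  obtain ⟨b, hb⟩ := hy
  have h1 : ofh R C (g b) = 0 := by
    rw [← mph_of, hb, (mph_exact h hf hg).apply_apply_eq_zero]
  have h2 : g b = 0 := AdicCompletion.of_injective (maximalIdeal R) C (h1.trans (map_zero _).symm)
  obtain ⟨a, rfl⟩ := (h b).1 h2
  rw [← mph_of] at hb
  rw [Submodule.Quotient.mk_eq_zero]
  exact ⟨a, AdicCompletion.map_injective (maximalIdeal R) hf hb⟩

end ex

theorem dh_kappa : Subsingleton (Dh R (κ R)) := by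
  rw [Submodule.Quotient.subsingleton_iff, LinearMap.range_eq_top]
  intro x
  have hb : ∀ n, ((maximalIdeal R)^(n+1) • ⊤ : Submodule R (κ R)) = ⊥ := by
    intro n
    rw [eq_bot_iff, Submodule.smul_le]
    intro r hr y _
    obtain ⟨y, rfl⟩ := Submodule.Quotient.mk_surjective _ y
    rw [Submodule.mem_bot, ← Submodule.Quotient.mk_smul, Submodule.Quotient.mk_eq_zero]
    exact Ideal.mul_mem_right _ _ (Ideal.pow_le_self (by omega) hr)
  obtain ⟨a, ha⟩ := Submodule.Quotient.mk_surjective _ (x.1 1)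
  refine ⟨a, ?_⟩
  ext n
  cases n with
  | zero =>
    obtain ⟨b, hb⟩ := Submodule.Quotient.mk_surjective _ (x.1 0)
    rw [← hb]
    refine (Submodule.Quotient.eq _).2 ?_
    rw [pow_zero, Ideal.one_eq_top, Submodule.top_smul]
    trivial
  | succ n =>
    obtain ⟨b, hb2⟩ := Submodule.Quotient.mk_surjective _ (x.1 (n+1))
    have h1 := x.2 (show 1 ≤ n + 1 by omega)
    rw [← hb2, ← ha] at h1
    have h2 : (Submodule.Quotient.mk b : _ ⧸ (maximalIdeal R ^ 1 • ⊤ : Submodule R (κ R))) = Submodule.Quotient.mk a := h1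
    rw [Submodule.Quotient.eq, hb 0, Submodule.mem_bot, sub_eq_zero] at h2
    rw [← hb2, h2]; rfl

theorem mph_lsmul (x : R) : mph (LinearMap.lsmul R A x) = LinearMap.lsmul R (Nh R A) x := by
  refine LinearMap.ext fun y => AdicCompletion.ext fun n => ?_
  obtain ⟨b, hb⟩ := Submodule.Quotient.mk_surjective _ (y.1 n)
  change (LinearMap.reduceModIdeal _ _ (y.1 n)) = x • (y.1 n)
  rw [← hb]; rfl

theorem dmap_lsmul (x : R) : dmap (LinearMap.lsmul R A x) = LinearMap.lsmul R (Dh R A) x := by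
  refine LinearMap.ext fun y => ?_
  obtain ⟨y, rfl⟩ := Submodule.Quotient.mk_surjective _ y
  change Submodule.Quotient.mk (mph (LinearMap.lsmul R A x) y) = Submodule.Quotient.mk (x • y)
  rw [mph_lsmul]; rfl

variable [IsNoetherianRing R]

theorem V_dh [Module.Finite R N] (i : ℕ) : V R (κ R) (Dh R N) i := by
  have subs : ∀ (A : Type) [AddCommGroup A] [Module R A] [Module.Finite R A] [Subsingleton A],
    ∀ i, V R (κ R) (Dh R A) i := by
    intro A _ _ _ _ i
    have : Subsingleton (Dh R A) := by
      refine ⟨fun a b => ?_⟩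
      obtain ⟨a, rfl⟩ := Submodule.Quotient.mk_surjective _ a
      obtain ⟨b, rfl⟩ := Submodule.Quotient.mk_surjective _ b
      congr 1
      ext n
      exact Subsingleton.elim _ _
    exact V_right_subsingleton i
  have exact : ∀ (A B C : Type) [AddCommGroup A] [Module R A] [Module.Finite R A]
    [AddCommGroup B] [Module R B] [Module.Finite R B] [AddCommGroup C] [Module R C] [Module.Finite R C]
    (f : A →ₗ[R] B) (g : B →ₗ[R] C), Function.Injective f → Function.Surjective g → Function.Exact f g →
    (∀ i, V R (κ R) (Dh R A) i) → (∀ i, V R (κ R) (Dh R C) i) → (∀ i, V R (κ R) (Dh R B) i) := by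
    intro A B C _ _ _ _ _ _ _ _ _ f g hf hg h h1 h3 i
    exact V_right_mid (dmap_exact h hf hg) (dmap_inj h hf hg) (dmap_surj hg) (h1 i) (h3 i)
  refine dev (R := R) (Q := fun A _ _ _ => ∀ i, V R (κ R) (Dh R A) i) ?_ ?_ ?_ ?_ ?_ N i
  · intro A _ _ _ _; exact subs A
  · intro A _ _ _ B _ _ _ eq H
    refine exact A B PUnit eq.toLinearMap (0 : B →ₗ[R] PUnit) eq.injective (fun x => ⟨0, rfl⟩) ?_ H (subs PUnit)
    intro b; exact ⟨fun _ => eq.surjective b, fun _ => rfl⟩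
  · intro A _ _ _ B _ _ _ C _ _ _ f g hf hg h h1 h3
    exact exact A B C f g hf hg h h1 h3
  · have := dh_kappa (R := R)
    exact fun i => V_right_subsingleton i
  · intro A B _ _ _ _ _ _ x hx hinj g hg hfg H i
    have e1 := dmap_exact hfg hinj hg
    have e2 := dmap_inj hfg hinj hg
    rw [dmap_lsmul] at e1 e2
    refine V_of_kill x e2 e1 (dmap_surj hg) ?_ (H i)
    intro y
    rw [← ann_kappa (R := R)] at hx
    exact Module.mem_annihilator.1 hx y

theorem V_kappa_hat [Module.Finite R N] (i : ℕ) : V R (κ R) (Nh R N) i ↔ V R (κ R) N i := by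
  have ex : Function.Exact (ofh R N) (LinearMap.range (ofh R N)).mkQ := LinearMap.exact_map_mkQ_range _
  have inj : Function.Injective (ofh R N) := AdicCompletion.of_injective _ _
  constructor
  · intro h
    cases i with
    | zero => exact V_right_one_zero inj h
    | succ i => exact V_right_one ex inj (Submodule.mkQ_surjective _) h (V_dh i)
  · intro h
    exact V_right_mid ex inj (Submodule.mkQ_surjective _) h (V_dh i)

omit [IsNoetherianRing R] in
theorem V_bij_hat (x : R) (hx : x ∈ maximalIdeal R) (hX : Function.Bijective (fun y : X => x • y)) (i : ℕ) :
    V R X (Nh R N) i := by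
  let F : ℕ → Type := fun j => N ⧸ (maximalIdeal R ^ j • ⊤ : Submodule R N)
  have hF : ∀ i j, V R X (F j) i := by
    intro i j
    refine V_of_bij_nilp x j hX ?_ i
    intro y
    obtain ⟨y, rfl⟩ := Submodule.Quotient.mk_surjective _ y
    rw [← Submodule.Quotient.mk_smul, Submodule.Quotient.mk_eq_zero]
    exact Submodule.smul_mem_smul (Ideal.pow_mem_pow hx j) trivial
  have hP : ∀ i, V R X (∀ j, F j) i := fun i => V_pi F i (hF i)
  let T : ∀ j, F (j+1) →ₗ[R] F j := fun j => AdicCompletion.transitionMap (maximalIdeal R) N (Nat.le_succ j)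
  have hT : ∀ j, Function.Surjective (T j) := fun j => Submodule.factor_surjective _
  let inc : Nh R N →ₗ[R] (∀ j, F j) := AdicCompletion.incl _ _
  let δ : (∀ j, F j) →ₗ[R] (∀ j, F j) := LinearMap.pi fun j => LinearMap.proj j - T j ∘ₗ LinearMap.proj (j+1)
  have hinc : Function.Injective inc := fun a b h => AdicCompletion.ext fun n => congrFun h n
  have hδ : Function.Surjective δ := by
    intro y
    choose L hL using hT
    let z : ∀ j, F j := fun j => Nat.rec (motive := F) 0 (fun j w => L j (w - y j)) j
    refine ⟨z, ?_⟩
    ext j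
    change z j - T j (L j (z j - y j)) = y j
    rw [hL]; abel
  have hex : Function.Exact inc δ := by
    intro z
    constructor
    · intro hz
      have hz' : ∀ j, T j (z (j+1)) = z j := fun j => by
        have := congrFun hz j
        change z j - T j (z (j+1)) = 0 at this
        exact (sub_eq_zero.1 this).symm
      refine ⟨⟨z, ?_⟩, rfl⟩
      intro a b hab
      induction b, hab using Nat.le_induction with
      | base =>
        obtain ⟨w, hw⟩ := Submodule.Quotient.mk_surjective _ (z a)
        rw [← hw]; rfl
      | succ b hab ih =>
        rw [← ih, ← hz' b]
        obtain ⟨w, hw⟩ := Submodule.Quotient.mk_surjective _ (z (b+1))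
        rw [← hw]; rfl
    · rintro ⟨y, rfl⟩
      ext j
      change y.1 j - T j (y.1 (j+1)) = 0
      rw [sub_eq_zero]
      exact (y.2 (Nat.le_succ j)).symm
  cases i with
  | zero => exact V_right_one_zero hinc (hP 0)
  | succ i => exact V_right_one hex hinc hδ (hP _) (hP _)

end Ulr

namespace Ulr

variable {R : Type} [CommRing R]
variable {X N A B C Y Z Q : Type} [AddCommGroup X] [Module R X] [AddCommGroup N] [Module R N]
  [AddCommGroup A] [Module R A] [AddCommGroup B] [Module R B] [AddCommGroup C] [Module R C]
  [AddCommGroup Y] [Module R Y] [AddCommGroup Z] [Module R Z] [AddCommGroup Q] [Module R Q]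

theorem factor_range (g : A →ₗ[R] B) (φ : A →ₗ[R] Z) (h : ∀ a, g a = 0 → φ a = 0) :
    ∃ ψ : LinearMap.range g →ₗ[R] Z, ∀ a, ψ ⟨g a, a, rfl⟩ = φ a := by
  have hk : LinearMap.ker g ≤ LinearMap.ker φ := fun a ha => h a ha
  refine ⟨(LinearMap.ker g).liftQ φ hk ∘ₗ g.quotKerEquivRange.symm.toLinearMap, ?_⟩
  intro a
  have : g.quotKerEquivRange.symm ⟨g a, a, rfl⟩ = Submodule.Quotient.mk a := by
    rw [LinearEquiv.symm_apply_eq]; rfl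
  simp [this]

theorem inj_factor [hY : Module.Injective R Y] (g : A →ₗ[R] B) (φ : A →ₗ[R] Y) (h : ∀ a, g a = 0 → φ a = 0) :
    ∃ ψ : B →ₗ[R] Y, ψ ∘ₗ g = φ := by
  obtain ⟨ψ, hψ⟩ := factor_range g φ h
  obtain ⟨χ, hχ⟩ := hY.out (LinearMap.range g).subtype (Submodule.subtype_injective _) ψ
  refine ⟨χ, ?_⟩
  ext a
  rw [← hψ, ← hχ]; rfl

/-- power torsion -/
def Γ (I : Ideal R) (Y : Type) [AddCommGroup Y] [Module R Y] : Submodule R Y where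
  carrier := {y | ∃ n : ℕ, ∀ r ∈ I ^ n, r • y = 0}
  zero_mem' := ⟨0, by simp⟩
  add_mem' := by
    rintro a b ⟨n, hn⟩ ⟨k, hk⟩
    refine ⟨max n k, fun r hr => ?_⟩
    rw [smul_add, hn r (Ideal.pow_le_pow_right (le_max_left _ _) hr),
      hk r (Ideal.pow_le_pow_right (le_max_right _ _) hr), add_zero]
  smul_mem' := by
    rintro c a ⟨n, hn⟩
    exact ⟨n, fun r hr => by rw [smul_comm, hn r hr, smul_zero]⟩

theorem mem_Γ {I : Ideal R} {y : Y} : y ∈ Γ I Y ↔ ∃ n : ℕ, ∀ r ∈ I ^ n, r • y = 0 := Iff.rfl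

theorem Γ_fg [IsNoetherianRing R] (I : Ideal R) (W : Submodule R Y) (hW : W.FG) (h : W ≤ Γ I Y) :
    ∃ n, ∀ r ∈ I ^ n, ∀ y ∈ W, r • y = 0 := by
  induction W, hW using Submodule.fg_induction with
  | singleton y =>
    obtain ⟨n, hn⟩ := h (Submodule.mem_span_singleton_self y)
    refine ⟨n, fun r hr z hz => ?_⟩
    obtain ⟨c, rfl⟩ := Submodule.mem_span_singleton.1 hz
    rw [smul_comm, hn r hr, smul_zero]
  | sup W1 W2 _ _ h1 h2 =>
    obtain ⟨n, hn⟩ := h1 (le_sup_left.trans h)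
    obtain ⟨k, hk⟩ := h2 (le_sup_right.trans h)
    refine ⟨max n k, fun r hr z hz => ?_⟩
    obtain ⟨a, ha, b, hb, rfl⟩ := Submodule.mem_sup.1 hz
    rw [smul_add, hn r (Ideal.pow_le_pow_right (le_max_left _ _) hr) a ha,
      hk r (Ideal.pow_le_pow_right (le_max_right _ _) hr) b hb, add_zero]

theorem Γ_injective [IsNoetherianRing R] (I : Ideal R) [Module.Injective R Y] : Module.Injective R (Γ I Y) := by
  rw [← Module.Baer.iff_injective]
  intro J φ
  have hfg : (LinearMap.range ((Γ I Y).subtype ∘ₗ φ)).FG := by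
    have : Module.Finite R J := inferInstance
    exact Module.Finite.iff_fg.1 (Module.Finite.range _)
  obtain ⟨n, hn⟩ := Γ_fg I _ hfg (by rintro _ ⟨j, rfl⟩; exact (φ j).2)
  obtain ⟨k, hk⟩ := I.exists_pow_inf_eq_pow_smul (M := R) J
  have key : ∀ j : J, (j : R) ∈ I ^ (n + k) → φ j = 0 := by
    intro j hj
    have h1 : (j : R) ∈ I ^ (n+k) • (⊤ : Submodule R R) ⊓ J := ⟨by simpa using hj, j.2⟩
    rw [hk (n+k) (by omega), Nat.add_sub_cancel] at h1
    have h2 : ∀ x ∈ I ^ n • (I ^ k • (⊤ : Submodule R R) ⊓ J), ∃ hx : x ∈ J, φ ⟨x, hx⟩ = 0 := by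
      intro x hx
      refine Submodule.smul_induction_on hx ?_ ?_
      · rintro r hr y ⟨-, hy⟩
        refine ⟨J.smul_mem r hy, ?_⟩
        have h3 : φ ⟨r • y, J.smul_mem r hy⟩ = r • φ ⟨y, hy⟩ := by rw [← map_smul]; rfl
        rw [h3]
        apply Subtype.ext
        exact hn r hr _ ⟨⟨y, hy⟩, rfl⟩
      · rintro x y ⟨hx, hx0⟩ ⟨hy, hy0⟩
        refine ⟨J.add_mem hx hy, ?_⟩
        have h3 : φ ⟨x + y, J.add_mem hx hy⟩ = φ ⟨x, hx⟩ + φ ⟨y, hy⟩ := by rw [← map_add]; rfl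
        rw [h3, hx0, hy0, add_zero]
    exact (h2 j h1).2
  obtain ⟨ψ, hψ⟩ := inj_factor ((I ^ (n+k)).mkQ ∘ₗ J.subtype) ((Γ I Y).subtype ∘ₗ φ) (by
    intro a ha
    have : (a : R) ∈ I ^ (n+k) := by
      rw [← Submodule.Quotient.mk_eq_zero]; exact ha
    simp [key a this])
  have hmem : ∀ x, ψ ((I ^ (n+k)).mkQ x) ∈ Γ I Y := by
    intro x
    refine ⟨n+k, fun r hr => ?_⟩
    have h0 : (I ^ (n+k)).mkQ (r • x) = 0 :=
      (Submodule.Quotient.mk_eq_zero _).2 (Ideal.mul_mem_right _ _ hr)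
    rw [← map_smul, ← map_smul, h0, map_zero]
  refine ⟨LinearMap.codRestrict (Γ I Y) (ψ ∘ₗ (I ^ (n+k)).mkQ) hmem, ?_⟩
  intro x hx
  apply Subtype.ext
  exact LinearMap.congr_fun hψ ⟨x, hx⟩

theorem inj_retract [hB : Module.Injective R B] (u : A →ₗ[R] B) (v : B →ₗ[R] A) (huv : v ∘ₗ u = LinearMap.id) :
    Module.Injective R A := by
  constructor
  intro X Y _ _ _ _ f hf g
  obtain ⟨h, hh⟩ := hB.out f hf (u ∘ₗ g)
  refine ⟨v ∘ₗ h, fun x => ?_⟩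
  rw [LinearMap.comp_apply, hh]
  exact LinearMap.congr_fun huv (g x)

theorem inj_quot [Module.Injective R B] (W : Submodule R B) [hW : Module.Injective R W] :
    Module.Injective R (B ⧸ W) := by
  obtain ⟨p, hp⟩ := hW.out W.subtype (Submodule.subtype_injective _) LinearMap.id
  have hp' : ∀ w : W, p w = w := hp
  refine inj_retract (B := B) (W.liftQ (LinearMap.id - W.subtype ∘ₗ p) ?_) W.mkQ ?_
  · intro w hw
    have := hp' ⟨w, hw⟩
    simp at this
    simp [this]
  · ext b
    simp

theorem bij_of_inj [hY : Module.Injective R Y] (x : R) (h : Function.Injective (LinearMap.lsmul R Y x)) :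
    Function.Bijective (fun y : Y => x • y) := by
  refine ⟨h, fun z => ?_⟩
  obtain ⟨g, hg⟩ := hY.out (LinearMap.lsmul R Y x) h LinearMap.id
  refine ⟨g z, ?_⟩
  have := hg z
  simp only [LinearMap.lsmul_apply, map_smul, LinearMap.id_apply] at this
  exact this

variable [IsLocalRing R] [IsNoetherianRing R]

theorem V_of_Γ_aux (s : Finset R) : ∀ (Y : Type) [AddCommGroup Y] [Module R Y] [Module.Injective R Y],
    (∀ x ∈ s, x ∈ maximalIdeal R) → Γ (Ideal.span (s : Set R)) Y = ⊥ → ∀ i, V R Y (Nh R N) i := by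
  classical
  induction s using Finset.induction_on with
  | empty =>
    intro Y _ _ _ _ h i
    have : Subsingleton Y := by
      refine ⟨fun a b => ?_⟩
      have H : ∀ a : Y, a = 0 := fun a => by
        have : a ∈ Γ (Ideal.span ((∅ : Finset R) : Set R)) Y := ⟨1, by simp⟩
        rw [h] at this; simpa using this
      rw [H a, H b]
    exact V_left_subsingleton i
  | insert x s hxs ih =>
    intro Y _ _ _ hm h i
    let W := Γ (Ideal.span {x}) Y
    have hW : Module.Injective R W := Γ_injective _
    have hq : Module.Injective R (Y ⧸ W) := inj_quot W
    refine V_left_mid (f := W.subtype) (g := W.mkQ) (LinearMap.exact_subtype_mkQ W) (Submodule.subtype_injective _)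
      (Submodule.mkQ_surjective _) (ih W (fun y hy => hm y (Finset.mem_insert_of_mem hy)) ?_ i) ?_
    · rw [eq_bot_iff]
      rintro ⟨y, n, hn⟩ ⟨k, hk⟩
      have : y ∈ Γ (Ideal.span ((insert x s : Finset R) : Set R)) Y := by
        refine ⟨n + k, fun r hr => ?_⟩
        rw [Finset.coe_insert, Ideal.span_insert] at hr
        obtain ⟨a, ha, b, hb, rfl⟩ := Submodule.mem_sup.1 (Ideal.sup_pow_add_le_pow_sup_pow hr)
        rw [add_smul, hn a ha, zero_add]
        exact congrArg Subtype.val (hk b hb)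
      rw [h] at this
      rw [Submodule.mem_bot]
      exact Subtype.ext (by simpa using this)
    · refine V_bij_hat x (hm x (Finset.mem_insert_self _ _)) (bij_of_inj x ?_) i
      rw [injective_iff_map_eq_zero]
      intro y hy
      obtain ⟨y, rfl⟩ := Submodule.Quotient.mk_surjective _ y
      rw [LinearMap.lsmul_apply, ← Submodule.Quotient.mk_smul, Submodule.Quotient.mk_eq_zero] at hy
      rw [Submodule.Quotient.mk_eq_zero]
      obtain ⟨n, hn⟩ := hy
      refine ⟨n+1, fun r hr => ?_⟩
      rw [Ideal.span_singleton_pow, Ideal.mem_span_singleton'] at hr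
      obtain ⟨c, rfl⟩ := hr
      have := hn (c * x ^ n) (Ideal.mul_mem_left _ _ (Ideal.pow_mem_pow (Ideal.mem_span_singleton_self x) n))
      rw [smul_smul] at this
      rw [pow_succ, ← mul_assoc]; exact this

theorem V_mod_Γ [Module.Injective R Y] (i : ℕ) : V R (Y ⧸ Γ (maximalIdeal R) Y) (Nh R N) i := by
  obtain ⟨s, hs⟩ := (isNoetherianRing_iff_ideal_fg R).1 inferInstance (maximalIdeal R)
  have hW : Module.Injective R (Γ (maximalIdeal R) Y) := Γ_injective _
  have hq := inj_quot (Γ (maximalIdeal R) Y)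
  refine V_of_Γ_aux s _ (fun x hx => hs ▸ Ideal.subset_span hx) ?_ i
  have hs' : Ideal.span (s : Set R) = maximalIdeal R := hs
  rw [hs', eq_bot_iff]
  rintro y ⟨n, hn⟩
  obtain ⟨y, rfl⟩ := Submodule.Quotient.mk_surjective _ y
  rw [Submodule.mem_bot, Submodule.Quotient.mk_eq_zero]
  have hfg : (Submodule.map (LinearMap.toSpanSingleton R Y y) (maximalIdeal R ^ n)).FG :=
    Submodule.FG.map _ ((isNoetherianRing_iff_ideal_fg R).1 inferInstance (maximalIdeal R ^ n))
  obtain ⟨k, hk⟩ := Γ_fg (maximalIdeal R) _ hfg (by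
    rintro _ ⟨r, hr, rfl⟩
    have := hn r hr
    rw [← Submodule.Quotient.mk_smul, Submodule.Quotient.mk_eq_zero] at this
    exact this)
  refine ⟨k + n, fun r hr => ?_⟩
  rw [pow_add] at hr
  refine Submodule.mul_induction_on hr ?_ ?_
  · intro a ha b hb
    rw [mul_smul]
    exact hk a ha _ ⟨b, hb, rfl⟩
  · intro a b ha hb
    rw [add_smul, ha, hb, add_zero]

omit [IsNoetherianRing R] in
theorem exists_socle (D : Submodule R Q) (n : ℕ) : ∀ (q : Q), q ∉ D → (∀ r ∈ maximalIdeal R ^ n, r • q ∈ D) →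
    ∃ q, q ∉ D ∧ ∀ r ∈ maximalIdeal R, r • q ∈ D := by
  induction n with
  | zero =>
    intro q hq h
    exact absurd (by simpa using h 1 (by simp)) hq
  | succ n ih =>
    intro q hq h
    by_cases H : ∀ r ∈ maximalIdeal R, r • q ∈ D
    · exact ⟨q, hq, H⟩
    · push Not at H
      obtain ⟨r, hr, hrq⟩ := H
      refine ih _ hrq (fun s hs => ?_)
      rw [smul_smul]
      exact h _ (by rw [pow_succ]; exact Ideal.mul_mem_mul hs hr)

omit [IsNoetherianRing R] in
theorem extend_tors (hV : ∀ g : maximalIdeal R →ₗ[R] Z, ∃ ψ : R →ₗ[R] Z, ∀ r : maximalIdeal R, ψ r = g r) (hQ : Γ (maximalIdeal R) Q = ⊤) (S : Submodule R Q)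
    (φ : S →ₗ[R] Z) : ∃ ψ : Q →ₗ[R] Z, ∀ s : S, ψ s = φ s := by
  have : Fact (Function.Injective S.subtype) := ⟨Submodule.subtype_injective _⟩
  let E := Module.Baer.extensionOfMax S.subtype φ
  suffices hD : E.domain = ⊤ by
    refine ⟨E.toFun ∘ₗ (LinearEquiv.ofTop _ hD).symm.toLinearMap, fun s => ?_⟩
    exact (E.is_extension s).symm
  by_contra hD
  obtain ⟨q0, -, hq0⟩ := SetLike.exists_of_lt (lt_top_iff_ne_top.2 hD)
  have hq0' : q0 ∈ Γ (maximalIdeal R) Q := by rw [hQ]; trivial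
  obtain ⟨n, hn⟩ := hq0'
  obtain ⟨q, hq, hmq⟩ := exists_socle E.domain n q0 hq0 (fun r hr => by rw [hn r hr]; exact zero_mem _)
  let g : maximalIdeal R →ₗ[R] Z := E.toFun ∘ₗ
    LinearMap.codRestrict E.domain (LinearMap.toSpanSingleton R Q q ∘ₗ (maximalIdeal R).subtype) (fun r => hmq r r.2)
  obtain ⟨ψ, hψ⟩ := hV g
  have hψ' : ∀ r (hr : r ∈ maximalIdeal R), ψ r = E.toFun ⟨r • q, hmq r hr⟩ :=
    fun r hr => hψ ⟨r, hr⟩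
  let G : (E.domain × R) →ₗ[R] Q := LinearMap.coprod E.domain.subtype (LinearMap.toSpanSingleton R Q q)
  obtain ⟨χ, hχ⟩ := factor_range G (LinearMap.coprod E.toFun ψ) (by
    rintro ⟨d, r⟩ h
    replace h : (d : Q) + r • q = 0 := h
    have hr : r ∈ maximalIdeal R := by
      by_contra hr
      have hu : IsUnit r := by
        by_contra h'; exact hr ((mem_maximalIdeal r).2 h')
      obtain ⟨u, rfl⟩ := hu
      apply hq
      have h1 : (u : R) • q = -(d : Q) := by rw [← add_eq_zero_iff_eq_neg, add_comm]; exact h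
      have h2 : q = (↑u⁻¹ : R) • (-(d : Q)) := by rw [← h1, smul_smul]; simp
      rw [h2]
      exact Submodule.smul_mem _ _ (Submodule.neg_mem _ d.2)
    rw [LinearMap.coprod_apply, hψ' r hr, ← map_add]
    have : d + ⟨r • q, hmq r hr⟩ = 0 := Subtype.ext h
    rw [this, map_zero])
  have hle : E.domain ≤ LinearMap.range G := fun d hd => ⟨(⟨d, hd⟩, 0), by simp [G]⟩
  have hχE : ∀ d (hd : d ∈ E.domain), χ ⟨d, hle hd⟩ = E.toFun ⟨d, hd⟩ := by
    intro d hd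
    have := hχ (⟨d, hd⟩, 0)
    simp only [LinearMap.coprod_apply, map_zero, add_zero] at this
    rw [← this]
    congr 1
    apply Subtype.ext
    simp [G]
  let E' : Module.Baer.ExtensionOf S.subtype φ :=
    { domain := LinearMap.range G
      toFun := χ
      le := E.le.trans hle
      is_extension := fun m => (E.is_extension m).trans (hχE _ _).symm }
  have hEE : E ≤ E' := by
    refine ⟨hle, ?_⟩
    rintro ⟨x, hx⟩ ⟨y, hy⟩ h
    obtain rfl : x = y := h
    exact (hχE x hx).symm
  have := Module.Baer.extensionOfMax_is_max S.subtype φ E' hEE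
  apply hq
  have h2 : E'.domain = E.domain := congrArg (fun e => e.domain) this
  rw [← h2]
  exact ⟨(0, 1), by simp [G]⟩

end Ulr

namespace Ulr

variable {R : Type} [CommRing R]
variable {X N A B C Y Z Q : Type} [AddCommGroup X] [Module R X] [AddCommGroup N] [Module R N]
  [AddCommGroup A] [Module R A] [AddCommGroup B] [Module R B] [AddCommGroup C] [Module R C]
  [AddCommGroup Y] [Module R Y] [AddCommGroup Z] [Module R Z] [AddCommGroup Q] [Module R Q]

/-- sequences of modules -/
structure Seq (R : Type) [CommRing R] where
  E : ℕ → Type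
  [acg : ∀ i, AddCommGroup (E i)]
  [mod : ∀ i, Module R (E i)]
  d : ∀ i, E i →ₗ[R] E (i+1)

attribute [instance] Seq.acg Seq.mod

/-- coboundaries -/
def Seq.Bd (P : Seq R) : (i : ℕ) → (X →ₗ[R] P.E i) → Prop
  | 0, f => f = 0
  | (i+1), f => ∃ g : X →ₗ[R] P.E i, P.d i ∘ₗ g = f

/-- `P` is an injective resolution of `N` -/
structure Seq.IsRes (P : Seq R) (N : Type) [AddCommGroup N] [Module R N] : Prop where
  inj : ∀ i, Module.Injective R (P.E i)
  dd : ∀ i x, P.d (i+1) (P.d i x) = 0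
  ex : ∀ i x, P.d (i+1) x = 0 → ∃ y, P.d i y = x
  V_iff : ∀ (X : Type) [AddCommGroup X] [Module R X] (i : ℕ), V R X N i ↔ ∀ f : X →ₗ[R] P.E i, P.d i ∘ₗ f = 0 → P.Bd i f

theorem exists_res (N : Type) [AddCommGroup N] [Module R N] : ∃ P : Seq R, P.IsRes N := by
  obtain ⟨⟨P⟩⟩ := (inferInstance : HasInjectiveResolution (ModuleCat.of R N))
  refine ⟨⟨fun i => P.cocomplex.X i, fun i => (P.cocomplex.d i (i+1)).hom⟩, ?_, ?_, ?_, ?_⟩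
  · intro i
    exact (Module.injective_iff_injective_object R (P.cocomplex.X i)).2 (P.injective i)
  · intro i x
    exact LinearMap.congr_fun (congrArg ModuleCat.Hom.hom (P.complex_d_comp i)) x
  · intro i x hx
    exact (ShortComplex.moduleCat_exact_iff _).1 (P.exact_succ i) x hx
  · intro X _ _ i
    cases i with
    | succ i => exact V_succ_inj P i
    | zero =>
      rw [V_zero]
      constructor
      · intro h f hf
        have hf' : (ModuleCat.ofHom f : ModuleCat.of R X ⟶ _) ≫ P.cocomplex.d 0 1 = 0 := by
          ext x; exact LinearMap.congr_fun hf x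
        obtain ⟨l, hl2⟩ : ∃ l : ModuleCat.of R X ⟶ ((HomologicalComplex.single (ModuleCat R) (.up ℕ) 0).obj (ModuleCat.of R N)).X 0,
            l ≫ P.ι.f 0 = ModuleCat.ofHom f :=
          ⟨(Limits.KernelFork.IsLimit.lift' P.isLimitKernelFork _ hf').1, (Limits.KernelFork.IsLimit.lift' P.isLimitKernelFork _ hf').2⟩
        have h1 := h (l ≫ (HomologicalComplex.singleObjXSelf (.up ℕ) 0 (ModuleCat.of R N)).hom).hom
        have h2 : l = 0 := by
          rw [← cancel_mono (HomologicalComplex.singleObjXSelf (.up ℕ) 0 (ModuleCat.of R N)).hom]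
          rw [Limits.zero_comp]
          exact ModuleCat.hom_ext h1
        subst h2
        exact (congrArg ModuleCat.Hom.hom (hl2.symm.trans Limits.zero_comp))
      · intro h g
        have h1 := h ((ModuleCat.ofHom g : ModuleCat.of R X ⟶ ModuleCat.of R N) ≫
          (HomologicalComplex.singleObjXSelf (.up ℕ) 0 (ModuleCat.of R N)).inv ≫ P.ι.f 0).hom (by
            ext x
            exact LinearMap.congr_fun (congrArg ModuleCat.Hom.hom P.ι_f_zero_comp_complex_d) _)
        have h2 : (ModuleCat.ofHom g : ModuleCat.of R X ⟶ ModuleCat.of R N) ≫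
          (HomologicalComplex.singleObjXSelf (.up ℕ) 0 (ModuleCat.of R N)).inv ≫ P.ι.f 0 = 0 := ModuleCat.hom_ext h1
        rw [← Category.assoc] at h2
        have h3 := Limits.zero_of_comp_mono _ h2
        have h4 := Limits.zero_of_comp_mono _ h3
        exact congrArg ModuleCat.Hom.hom h4

theorem Bd_comp {P : Seq R} {i : ℕ} {f : X →ₗ[R] P.E i} (h : P.Bd i f) (g : A →ₗ[R] X) : P.Bd i (f ∘ₗ g) := by
  cases i with
  | zero =>
    have h' : f = 0 := h
    exact show f ∘ₗ g = 0 by rw [h', LinearMap.zero_comp]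
  | succ i =>
    obtain ⟨u, hu⟩ := h
    exact ⟨u ∘ₗ g, by rw [← LinearMap.comp_assoc, hu]⟩

/-- maps vanishing on a submodule descend -/
theorem descend (W : Submodule R A) (f : A →ₗ[R] B) (h : ∀ x ∈ W, f x = 0) :
    ∃ g : A ⧸ W →ₗ[R] B, ∀ x, g (W.mkQ x) = f x :=
  ⟨W.liftQ f h, fun x => W.liftQ_apply f x⟩

variable [IsLocalRing R]

theorem kap (y : Y) (h : ∀ r ∈ maximalIdeal R, r • y = 0) : ∃ f : κ R →ₗ[R] Y, f 1 = y := by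
  obtain ⟨g, hg⟩ := descend (maximalIdeal R) (LinearMap.toSpanSingleton R Y y) h
  exact ⟨g, (hg 1).trans (by simp)⟩

theorem kap_kill (f : κ R →ₗ[R] Y) (r : R) (hr : r ∈ maximalIdeal R) : r • f 1 = 0 := by
  rw [← map_smul]
  have : r • (1 : κ R) = 0 := by
    rw [Algebra.smul_def, mul_one]
    exact Ideal.Quotient.eq_zero_iff_mem.2 hr
  rw [this, map_zero]

theorem kap_ext {f g : κ R →ₗ[R] Y} (h : f 1 = g 1) : f = g := by
  apply Submodule.linearMap_qext
  ext
  exact h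

omit [IsLocalRing R] in
theorem Γ_map (I : Ideal R) (f : A →ₗ[R] B) {x : A} (hx : x ∈ Γ I A) : f x ∈ Γ I B := by
  obtain ⟨n, hn⟩ := hx
  exact ⟨n, fun r hr => by rw [← map_smul, hn r hr, map_zero]⟩

variable [IsNoetherianRing R]

theorem V_fl {i : ℕ} (hV : V R (κ R) N i) (S : Type) [AddCommGroup S] [Module R S] [Module.Finite R S]
    (n : ℕ) (hS : ∀ r ∈ maximalIdeal R ^ n, ∀ s : S, r • s = 0) : V R S N i := by
  have hN : IsNoetherian R S := inferInstance
  obtain ⟨W, hW, hmax⟩ := set_has_maximal_iff_noetherian.2 hN {W : Submodule R S | V R W N i}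
    ⟨⊥, V_left_subsingleton i⟩
  by_cases hT : W = ⊤
  · subst hT
    exact V_left_equiv Submodule.topEquiv hW
  · exfalso
    obtain ⟨q0, -, hq0⟩ := SetLike.exists_of_lt (lt_top_iff_ne_top.2 hT)
    obtain ⟨q, hq, hmq⟩ := exists_socle W n q0 hq0 (fun r hr => by rw [hS r hr]; exact zero_mem _)
    let W' := W ⊔ Submodule.span R {q}
    have hqW' : q ∈ W' := (le_sup_right : _ ≤ W') (Submodule.mem_span_singleton_self q)
    have hlt : W < W' := lt_of_le_of_ne le_sup_left (fun h => hq (h ▸ hqW'))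
    refine hmax W' ?_ hlt
    let U : Submodule R W' := W.comap W'.subtype
    have hU : V R U N i := V_left_equiv (Submodule.comapSubtypeEquivOfLe hlt.le).symm hW
    obtain ⟨f, hf⟩ := kap (U.mkQ ⟨q, hqW'⟩) (fun r hr => by
      rw [← map_smul]
      exact (Submodule.Quotient.mk_eq_zero _).2 (hmq r hr))
    have hbij : Function.Bijective f := by
      constructor
      · let _ : Field (κ R) := Ideal.Quotient.field _
        rw [← LinearMap.ker_eq_bot, eq_bot_iff]
        intro x hx
        obtain ⟨r, rfl⟩ := Submodule.Quotient.mk_surjective _ x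
        rw [Submodule.mem_bot, Submodule.Quotient.mk_eq_zero]
        by_contra hr
        have hu : IsUnit r := by
          by_contra h'; exact hr ((mem_maximalIdeal r).2 h')
        obtain ⟨u, rfl⟩ := hu
        have h1 : (Submodule.Quotient.mk (u : R) : κ R) = (u : R) • 1 := by
          rw [Algebra.smul_def, mul_one]; rfl
        rw [LinearMap.mem_ker, h1, map_smul, hf, ← map_smul] at hx
        have h2 : (u : R) • q ∈ W := (Submodule.Quotient.mk_eq_zero U).1 hx
        apply hq
        have := W.smul_mem (↑u⁻¹ : R) h2
        rwa [smul_smul, Units.inv_mul, one_smul] at this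
      · intro y
        obtain ⟨⟨y, hy⟩, rfl⟩ := Submodule.Quotient.mk_surjective _ y
        obtain ⟨w, hw, v, hv, rfl⟩ := Submodule.mem_sup.1 hy
        obtain ⟨c, rfl⟩ := Submodule.mem_span_singleton.1 hv
        refine ⟨c • 1, ?_⟩
        rw [map_smul, hf, ← map_smul]
        refine (Submodule.Quotient.eq _).2 ?_
        show c • q - (w + c • q) ∈ W
        simpa using hw
    exact V_left_mid (f := U.subtype) (g := U.mkQ) (LinearMap.exact_subtype_mkQ U)
      (Submodule.subtype_injective _) (Submodule.mkQ_surjective _) hU (V_left_equiv (LinearEquiv.ofBijective f hbij) hV)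

theorem zlem {P : Seq R} (hP : P.IsRes N) (p : ℕ) (h1 : V R (κ R) N (p+1)) (h2 : ¬ V R (κ R) N (p+2)) :
    ∃ z : P.E (p+2), (∀ r ∈ maximalIdeal R, r • z = 0) ∧ P.d (p+2) z = 0 ∧
      ∀ w ∈ Γ (maximalIdeal R) (P.E (p+1)), P.d (p+1) w ≠ z := by
  rw [hP.V_iff] at h2
  push Not at h2
  obtain ⟨f, hf, hf2⟩ := h2
  refine ⟨f 1, kap_kill f, LinearMap.congr_fun hf 1, fun w hw hwz => hf2 ?_⟩
  let S : Submodule R (P.E (p+1)) := Submodule.map (LinearMap.toSpanSingleton R _ w) (maximalIdeal R)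
  have hfg : S.FG :=
    Submodule.FG.map _ ((isNoetherianRing_iff_ideal_fg R).1 inferInstance (maximalIdeal R))
  have : Module.Finite R S := Module.Finite.iff_fg.2 hfg
  obtain ⟨n, hn⟩ := hw
  have hVS : V R S N (p+1) := V_fl h1 S n (by
    rintro r hr ⟨_, t, ht, rfl⟩
    apply Subtype.ext
    show r • t • w = 0
    rw [smul_comm, hn r hr, smul_zero])
  obtain ⟨g, hg⟩ := (hP.V_iff S (p+1)).1 hVS S.subtype (by
    ext ⟨_, t, ht, rfl⟩
    show P.d (p+1) (t • w) = 0
    rw [map_smul, hwz]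
    exact kap_kill f t ht)
  obtain ⟨G, hG⟩ := (hP.inj p).out S.subtype (Submodule.subtype_injective _) g
  obtain ⟨u, hu⟩ := kap (w - P.d p (G w)) (fun r hr => by
    have hrS : r • w ∈ S := ⟨r, hr, rfl⟩
    have h3 := hG ⟨r • w, hrS⟩
    have h4 : P.d p (g ⟨r • w, hrS⟩) = r • w := LinearMap.congr_fun hg _
    rw [← h3] at h4
    rw [smul_sub, ← map_smul, ← map_smul, sub_eq_zero]
    exact h4.symm)
  refine ⟨u, kap_ext ?_⟩
  rw [LinearMap.comp_apply, hu, map_sub, hP.dd, sub_zero, hwz]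

theorem Lem {P J : Seq R} (hP : P.IsRes N) (hJ : J.IsRes (Nh R N)) (a : ℕ) : ∀ (j : ℕ), a ≤ j →
    ∀ F : P.E (j+1) →ₗ[R] J.E a, (∀ x, J.d a (F (P.d j x)) = 0) →
    (∀ x ∈ Γ (maximalIdeal R) (P.E j), F (P.d j x) = 0) →
    ∃ (h : P.E (j+2) →ₗ[R] J.E a) (H : P.E (j+1) →ₗ[R] J.E a), J.Bd a H ∧ ∀ x, F x = H x + h (P.d (j+1) x) := by
  induction a with
  | zero =>
    intro j _ F hF hΓ
    have := hP.inj j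
    have := hJ.inj 0
    obtain ⟨g, hg⟩ := descend (Γ (maximalIdeal R) (P.E j)) (F ∘ₗ P.d j) hΓ
    have hg0 : g = 0 := (hJ.V_iff _ 0).1 (V_mod_Γ 0) g (by
      ext x
      show J.d 0 (g (Submodule.mkQ _ x)) = 0
      rw [hg]; exact hF x)
    obtain ⟨h, hh⟩ := inj_factor (P.d (j+1)) F (fun x hx => by
      obtain ⟨y, rfl⟩ := hP.ex j x hx
      have := hg y
      rw [hg0] at this
      exact this.symm)
    refine ⟨h, 0, rfl, fun x => ?_⟩
    rw [← hh]; simp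
  | succ a ih =>
    intro j hj F hF hΓ
    obtain ⟨j, rfl⟩ : ∃ j', j = j' + 1 := ⟨j - 1, by omega⟩
    have := hP.inj (j+1)
    have := hJ.inj (a+1)
    obtain ⟨g, hg⟩ := descend (Γ (maximalIdeal R) (P.E (j+1))) (F ∘ₗ P.d (j+1)) hΓ
    obtain ⟨g', hg'⟩ := (hJ.V_iff _ (a+1)).1 (V_mod_Γ (a+1)) g (by
      ext x
      show J.d (a+1) (g (Submodule.mkQ _ x)) = 0
      rw [hg]; exact hF x)
    let F' : P.E (j+1) →ₗ[R] J.E a := g' ∘ₗ Submodule.mkQ _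
    have hF' : ∀ x, J.d a (F' x) = F (P.d (j+1) x) := by
      intro x
      refine Eq.trans ?_ (hg x)
      rw [← hg']; rfl
    have hF'Γ : ∀ x ∈ Γ (maximalIdeal R) (P.E (j+1)), F' x = 0 := by
      intro x hx
      show g' (Submodule.mkQ _ x) = 0
      rw [Submodule.mkQ_apply, (Submodule.Quotient.mk_eq_zero _).2 hx, map_zero]
    obtain ⟨h, H, hH, hh⟩ := ih j (by omega) F' (fun x => by rw [hF', hP.dd, map_zero])
      (fun x hx => hF'Γ _ (Γ_map _ _ hx))
    have hdH : ∀ x, J.d a (H x) = 0 := by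
      intro x
      cases a with
      | zero =>
        have : H = 0 := hH
        rw [this]; simp
      | succ a =>
        obtain ⟨u, rfl⟩ := hH
        exact hJ.dd _ _
    obtain ⟨k, hk⟩ := inj_factor (P.d (j+2)) (F - J.d a ∘ₗ h) (fun x hx => by
      obtain ⟨y, rfl⟩ := hP.ex (j+1) x hx
      rw [LinearMap.sub_apply, ← hF', hh, map_add, hdH]
      simp)
    refine ⟨k, J.d a ∘ₗ h, ⟨h, rfl⟩, fun x => ?_⟩
    have := LinearMap.congr_fun hk x
    simp only [LinearMap.comp_apply, LinearMap.sub_apply] at this ⊢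
    rw [this]; abel

theorem gap [Module.Finite R N] (a p : ℕ) (hap : a ≤ p) (h1 : ¬ V R (κ R) N a) (h2 : V R (κ R) N (a+1))
    (h3 : V R (κ R) N (p+1)) (h4 : ¬ V R (κ R) N (p+2)) : False := by
  obtain ⟨P, hP⟩ := exists_res (R := R) N
  obtain ⟨J, hJ⟩ := exists_res (R := R) (Nh R N)
  obtain ⟨z, hmz, hdz, hz⟩ := zlem hP p h3 h4
  rw [← V_kappa_hat] at h1 h2
  rw [hJ.V_iff] at h1
  push Not at h1
  obtain ⟨f0, hf0, hf0'⟩ := h1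
  have hIb := hP.inj (p+2)
  have hJa := hJ.inj a
  let Zc := LinearMap.ker (J.d a)
  have hext : ∀ g : maximalIdeal R →ₗ[R] Zc, ∃ ψ : R →ₗ[R] Zc, ∀ r : maximalIdeal R, ψ r = g r := by
    intro g
    obtain ⟨ψ0, hψ0⟩ := hJa.out (maximalIdeal R).subtype (Submodule.subtype_injective _) (Zc.subtype ∘ₗ g)
    have hψ0' : ∀ r (hr : r ∈ maximalIdeal R), ψ0 r = g ⟨r, hr⟩ := fun r hr => hψ0 ⟨r, hr⟩
    obtain ⟨u, hu⟩ := descend (maximalIdeal R) (J.d a ∘ₗ ψ0) (fun r hr => by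
      rw [LinearMap.comp_apply, hψ0' r hr]
      exact (g _).2)
    obtain ⟨v, hv⟩ := (hJ.V_iff _ (a+1)).1 h2 u (by
      apply Submodule.linearMap_qext
      ext
      show J.d (a+1) (u (Submodule.mkQ _ 1)) = 0
      rw [hu]
      exact hJ.dd _ _)
    refine ⟨LinearMap.codRestrict Zc (ψ0 - v ∘ₗ Submodule.mkQ _) (fun r => ?_), fun r => ?_⟩
    · show J.d a (ψ0 r - v (Submodule.mkQ _ r)) = 0
      rw [map_sub, sub_eq_zero]
      refine (hu r).symm.trans ?_
      rw [← hv]; rfl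
    · apply Subtype.ext
      show ψ0 r - v (Submodule.mkQ _ (r : R)) = g r
      rw [hψ0' r r.2, Submodule.mkQ_apply, (Submodule.Quotient.mk_eq_zero _).2 r.2, map_zero, sub_zero]
  let T := Γ (maximalIdeal R) (P.E (p+2))
  let D : Submodule R T := (Submodule.map (P.d (p+1)) (Γ (maximalIdeal R) (P.E (p+1)))).comap T.subtype
  have hzT : z ∈ T := ⟨1, by simpa using hmz⟩
  have hQ : Γ (maximalIdeal R) (T ⧸ D) = ⊤ := by
    rw [eq_top_iff]
    rintro q -
    obtain ⟨⟨t, n, hn⟩, rfl⟩ := Submodule.Quotient.mk_surjective _ q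
    refine ⟨n, fun r hr => ?_⟩
    rw [← Submodule.Quotient.mk_smul]
    have : r • (⟨t, n, hn⟩ : T) = 0 := Subtype.ext (hn r hr)
    rw [this]; rfl
  let zq : T ⧸ D := D.mkQ ⟨z, hzT⟩
  have hzq : zq ≠ 0 := by
    intro h
    obtain ⟨w, hw, hwz⟩ := (Submodule.Quotient.mk_eq_zero D).1 h
    exact hz w hw hwz
  let y0 : Zc := ⟨f0 1, LinearMap.congr_fun hf0 1⟩
  obtain ⟨ψ, hψ⟩ := factor_range (LinearMap.toSpanSingleton R _ zq) (LinearMap.toSpanSingleton R _ y0) (by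
    intro r hr
    have hrm : r ∈ maximalIdeal R := by
      by_contra hrm
      have hu : IsUnit r := by
        by_contra h'; exact hrm ((mem_maximalIdeal r).2 h')
      obtain ⟨u, rfl⟩ := hu
      apply hzq
      have : (u : R) • zq = 0 := hr
      rw [← one_smul R zq, ← Units.inv_mul u, mul_smul, this, smul_zero]
    exact Subtype.ext (kap_kill f0 r hrm))
  obtain ⟨χ, hχ⟩ := extend_tors hext hQ _ ψ
  have hχz : (χ zq : J.E a) = f0 1 := by
    have h5 := hψ 1
    rw [← hχ] at h5
    simp only [LinearMap.toSpanSingleton_apply, one_smul] at h5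
    rw [h5]
  obtain ⟨F0, hF0⟩ := hJa.out T.subtype (Submodule.subtype_injective _) (Zc.subtype ∘ₗ χ ∘ₗ D.mkQ)
  have hF0' : ∀ x (hx : x ∈ T), F0 x = χ (D.mkQ ⟨x, hx⟩) := fun x hx => hF0 ⟨x, hx⟩
  obtain ⟨u, hu⟩ := descend T (J.d a ∘ₗ F0) (fun x hx => by
    rw [LinearMap.comp_apply, hF0' x hx]
    exact (χ _).2)
  obtain ⟨v, hv⟩ := (hJ.V_iff _ (a+1)).1 (V_mod_Γ (Y := P.E (p+2)) (a+1)) u (by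
    apply Submodule.linearMap_qext
    ext x
    show J.d (a+1) (u (Submodule.mkQ _ x)) = 0
    rw [hu]
    exact hJ.dd _ _)
  let F : P.E (p+2) →ₗ[R] J.E a := F0 - v ∘ₗ T.mkQ
  have hdF : ∀ x, J.d a (F x) = 0 := by
    intro x
    show J.d a (F0 x - v (T.mkQ x)) = 0
    rw [map_sub, sub_eq_zero]
    refine (hu x).symm.trans ?_
    rw [← hv]; rfl
  have hFT : ∀ x (hx : x ∈ T), F x = χ (D.mkQ ⟨x, hx⟩) := by
    intro x hx
    show F0 x - v (T.mkQ x) = _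
    rw [hF0' x hx, Submodule.mkQ_apply T, (Submodule.Quotient.mk_eq_zero _).2 hx, map_zero, sub_zero]
  obtain ⟨h, H, hH, hh⟩ := Lem hP hJ a (p+1) (by omega) F (fun x => hdF _) (fun x hx => by
    rw [hFT _ (Γ_map _ _ hx)]
    have : D.mkQ ⟨P.d (p+1) x, Γ_map _ _ hx⟩ = 0 := (Submodule.Quotient.mk_eq_zero _).2 ⟨x, hx, rfl⟩
    rw [this, map_zero]; rfl)
  obtain ⟨kz, hkz⟩ := kap z hmz
  apply hf0'
  have : f0 = H ∘ₗ kz := by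
    apply kap_ext
    rw [LinearMap.comp_apply, hkz, ← hχz]
    have := hh z
    rw [hFT z hzT, hdz, map_zero, add_zero] at this
    exact this
  rw [this]
  exact Bd_comp hH kz

end Ulr

theorem statement2 (R : Type) [CommRing R] [IsNoetherianRing R] [IsLocalRing R]
    (M : Type) [AddCommGroup M] [Module R M] [Module.Finite R M]
    (s : ℕ) (hM : IsUlrich R M s)
    (N : Type) [AddCommGroup N] [Module R N] [Module.Finite R N]
    (n : ℕ) (hn : 1 ≤ n) (hdepth : depth R N ≤ ((n + s : ℕ) : ℕ∞))
    (hvan : ∀ i : ℕ, n ≤ i → i ≤ n + s → ExtVanish R M N i) :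
    InjDimFinite R N := by
  classical
  obtain ⟨-, -, -, rs, hlen, hrs, hreg, hm⟩ := hM
  rcases subsingleton_or_nontrivial N with hN | hN
  · refine ⟨1, fun X i hi => ?_⟩
    obtain ⟨i, rfl⟩ : ∃ j, i = j + 1 := ⟨i - 1, by omega⟩
    exact (Ulr.bridge i).2 (Ulr.V_right_subsingleton _)
  have hV : Ulr.V R (Ulr.κ R) N (n + s) := by
    have h0 := Ulr.step0 (N := N) rs M n hreg.toIsWeaklyRegular (fun i h1 h2 => by
      obtain ⟨i, rfl⟩ : ∃ j, i = j + 1 := ⟨i - 1, by omega⟩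
      exact (Ulr.bridge i).1 (hvan _ h1 (by omega)))
    have hnt := hreg.quot_ofList_smul_nontrivial (⊤ : Submodule R M)
    rw [hlen] at h0
    have hnt' : Nontrivial (M ⧸ (maximalIdeal R • ⊤ : Submodule R M)) := by
      rw [Submodule.Quotient.nontrivial_iff, hm]
      exact fun h => hreg.top_ne_smul h.symm
    refine Ulr.V_kappa M ?_
    rw [hm]; exact h0
  obtain ⟨e, he⟩ : ∃ e, n + s = e + 1 := ⟨n + s - 1, by omega⟩
  rw [he] at hV hdepth
  by_cases hall : ∀ i, e + 1 ≤ i → Ulr.V R (Ulr.κ R) N i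
  · refine ⟨e + 1, fun X i hi => ?_⟩
    have := Ulr.injdim e N (fun I i hi => Ulr.V_fg (e+1) hall (R ⧸ I) i hi) X i hi
    obtain ⟨i, rfl⟩ : ∃ j, i = j + 1 := ⟨i - 1, by omega⟩
    exact (Ulr.bridge i).2 this
  exfalso
  push Not at hall
  have hlow : ∃ i, i ≤ e ∧ ¬ Ulr.V R (Ulr.κ R) N i := by
    by_contra H
    push Not at H
    obtain ⟨rs', h1, h2, h3⟩ := Ulr.step1 (e+1) N (fun i hi => by
      rcases Nat.lt_or_ge e i with h | h
      · obtain rfl : i = e + 1 := by omega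
        exact hV
      · exact H i h)
    have h4 : ((rs'.length : ℕ) : ℕ∞) ≤ depth R N := le_sSup ⟨rs', h1, h2, rfl⟩
    have h5 := h4.trans hdepth
    rw [h3, Nat.cast_le] at h5
    omega
  let b := Nat.find hall
  obtain ⟨hb1, hb2⟩ := Nat.find_spec hall
  have hb3 : ∀ i, i < b → e + 1 ≤ i → Ulr.V R (Ulr.κ R) N i := by
    intro i hi hi'
    by_contra H
    exact Nat.find_min hall hi ⟨hi', H⟩
  obtain ⟨i0, hi0, hi0'⟩ := hlow
  let a := Nat.findGreatest (fun i => ¬ Ulr.V R (Ulr.κ R) N i) e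
  have ha1 : ¬ Ulr.V R (Ulr.κ R) N a := Nat.findGreatest_spec (P := fun i => ¬ Ulr.V R (Ulr.κ R) N i) hi0 hi0'
  have hae : a ≤ e := Nat.findGreatest_le e
  have ha2 : ∀ i, a < i → i ≤ e → Ulr.V R (Ulr.κ R) N i := by
    intro i h1 h2
    by_contra H
    exact Nat.findGreatest_is_greatest h1 h2 H
  have hbe : b ≠ e + 1 := fun h => hb2 (by rw [show Nat.find hall = e + 1 from h]; exact hV)
  have hb1' : e + 1 ≤ b := hb1
  have hmid : ∀ i, a < i → i < b → Ulr.V R (Ulr.κ R) N i := by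
    intro i h1 h2
    rcases Nat.lt_or_ge e i with h | h
    · exact hb3 i h2 h
    · exact ha2 i h1 h
  obtain ⟨p, hp⟩ : ∃ p, b = p + 2 := ⟨b - 2, by omega⟩
  refine Ulr.gap a p (by omega) ha1 (hmid _ (by omega) (by omega)) (hmid _ (by omega) (by omega)) ?_
  rw [← hp]
  exact hb2
end

section
/- Let (R, m, k) be a commutative Noetherian local ring and let M be an Ulrich R-module of dimension s. If L is a finitely generated R-module and there exists an integer n ≥ 1 such that Ext_R^i(L, M) = 0 for all n ≤ i ≤ n+s, then the projective dimension of L over R is finite and pd_R L < n. -/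
open CategoryTheory IsLocalRing

open CategoryTheory IsLocalRing TensorProduct

lemma aux_extVanish_iff {R : Type} [CommRing R] (M N : Type) [AddCommGroup M] [Module R M]
    [AddCommGroup N] [Module R N] (i : ℕ) :
    ExtVanish R M N (i + 1) ↔
      Subsingleton (Abelian.Ext (ModuleCat.of R M) (ModuleCat.of R N) (i + 1)) := by
  let P := projectiveResolution (ModuleCat.of R M)
  have h1 : ExtVanish R M N (i + 1) ↔
      ∀ f : P.complex.X (i + 1) ⟶ ModuleCat.of R N, P.complex.d (i + 2) (i + 1) ≫ f = 0 →
        ∃ g : P.complex.X i ⟶ ModuleCat.of R N, P.complex.d (i + 1) i ≫ g = f := by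
    unfold ExtVanish
    rw [← ModuleCat.isZero_iff_subsingleton,
      (P.isoExt (R := R) (i + 1) (ModuleCat.of R N)).isZero_iff,
      ← HomologicalComplex.exactAt_iff_isZero_homology,
      HomologicalComplex.exactAt_iff' _ i (i + 1) (i + 2) (by simp) (by simp),
      ShortComplex.moduleCat_exact_iff]
    rfl
  rw [h1]
  constructor
  · intro h
    refine subsingleton_of_forall_eq 0 fun α => ?_
    obtain ⟨f, hf, rfl⟩ := P.extMk_surjective α (i + 2) rfl
    exact (P.extMk_eq_zero_iff f (i + 2) rfl hf i rfl).2 (h f hf)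
  · intro h f hf
    exact (P.extMk_eq_zero_iff f (i + 2) rfl hf i rfl).1 (Subsingleton.elim _ _)

lemma aux_inj {R : Type} [CommRing R] [IsLocalRing R] {K F V : Type}
    [AddCommGroup K] [Module R K] [AddCommGroup F] [Module R F] [AddCommGroup V] [Module R V]
    [Nontrivial V] (hV : maximalIdeal R • (⊤ : Submodule R V) = ⊥) (f : K →ₗ[R] F)
    (hext : ∀ φ : K →ₗ[R] V, ∃ g : F →ₗ[R] V, g ∘ₗ f = φ) :
    Function.Injective (f.lTensor (ResidueField R)) := by
  rw [injective_iff_map_eq_zero]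
  intro z hz
  obtain ⟨x, rfl⟩ := TensorProduct.mk_surjective R K (ResidueField R) residue_surjective z
  simp only [TensorProduct.mk_apply, LinearMap.lTensor_tmul] at hz ⊢
  have hmem : f x ∈ maximalIdeal R • (⊤ : Submodule R F) := by
    have := congrArg (TensorProduct.quotTensorEquivQuotSMul F (maximalIdeal R)) hz
    have h2 := TensorProduct.quotTensorEquivQuotSMul_mk_tmul (M := F) (maximalIdeal R) 1 (f x)
    rw [one_smul] at h2
    rw [← Submodule.Quotient.mk_eq_zero]
    exact h2.symm.trans (this.trans (LinearEquiv.map_zero _))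
  obtain ⟨v, hv⟩ := exists_ne (0 : V)
  rw [← Module.forall_dual_apply_eq_zero_iff (ResidueField R)]
  intro φ
  have hkill : maximalIdeal R ≤ LinearMap.ker (LinearMap.toSpanSingleton R V v) := by
    intro r hr
    have : r • v ∈ maximalIdeal R • (⊤ : Submodule R V) :=
      Submodule.smul_mem_smul hr trivial
    rw [hV] at this
    simpa using this
  let ι : ResidueField R →ₗ[R] V := Submodule.liftQ (maximalIdeal R) _ hkill
  have hι : ∀ a, ι a = 0 → a = 0 := by
    intro a ha
    obtain ⟨r, rfl⟩ := residue_surjective a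
    have h3 : r • v = 0 := ha
    rw [residue_eq_zero_iff, mem_maximalIdeal]
    intro hu
    exact hv ((hu.smul_eq_zero).1 h3)
  obtain ⟨g, hg⟩ := hext (ι ∘ₗ (φ.restrictScalars R) ∘ₗ TensorProduct.mk R (ResidueField R) K 1)
  apply hι
  have h4 := LinearMap.congr_fun hg x
  have h5 : g (f x) = 0 := by
    have : g (f x) ∈ (maximalIdeal R • (⊤ : Submodule R F)).map g := ⟨_, hmem, rfl⟩
    rw [Submodule.map_smul''] at this
    have h6 := (Submodule.smul_mono le_rfl le_top : maximalIdeal R • Submodule.map g ⊤ ≤ maximalIdeal R • ⊤) this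
    rw [hV] at h6
    simpa using h6
  simp only [LinearMap.comp_apply] at h4
  rw [h5] at h4
  exact h4.symm

lemma aux_pd {R : Type} [CommRing R] [IsNoetherianRing R] [IsLocalRing R] (V : Type)
    [AddCommGroup V] [Module R V] [Nontrivial V]
    (hV : maximalIdeal R • (⊤ : Submodule R V) = ⊥) (n : ℕ) (M : ModuleCat.{0} R)
    [Module.Finite R M] (h : Subsingleton (Abelian.Ext M (ModuleCat.of R V) (n + 1))) :
    HasProjectiveDimensionLT M (n + 1) := by
  induction n generalizing M with
  | zero =>
    rcases Module.exists_finite_presentation R M with ⟨F, _, _, _, _, f, surjf⟩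
    let S : ShortComplex (ModuleCat.{0} R) := f.shortComplexKer
    have hS : S.ShortExact := LinearMap.shortExact_shortComplexKer surjf
    have hfree : Module.Free R M := by
      refine Module.free_of_lTensor_residueField_injective (LinearMap.ker f).subtype f surjf
        (LinearMap.exact_subtype_ker_map f) (aux_inj hV _ fun φ => ?_)
      obtain ⟨x₂, hx₂⟩ := Abelian.Ext.contravariant_sequence_exact₁ hS (ModuleCat.of R V)
        (Abelian.Ext.mk₀ (ModuleCat.ofHom φ)) (add_zero 1)
        (@Subsingleton.elim _ h _ _)
      obtain ⟨g, rfl⟩ := (Abelian.Ext.mk₀_bijective _ _).2 x₂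
      rw [Abelian.Ext.mk₀_comp_mk₀, (Abelian.Ext.mk₀_bijective _ _).1.eq_iff] at hx₂
      exact ⟨g.hom, congrArg ModuleCat.Hom.hom hx₂⟩
    rw [zero_add, ← projective_iff_hasProjectiveDimensionLT_one, ← IsProjective.iff_projective]
    exact Module.Projective.of_free
  | succ n hn =>
    rcases Module.exists_finite_presentation R M with ⟨F, _, _, _, _, f, surjf⟩
    let S : ShortComplex (ModuleCat.{0} R) := f.shortComplexKer
    have hS : S.ShortExact := LinearMap.shortExact_shortComplexKer surjf
    rw [hS.hasProjectiveDimensionLT_X₃_iff n inferInstance]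
    apply hn S.X₁
    refine subsingleton_of_forall_eq 0 fun x => ?_
    obtain ⟨x₂, hx₂⟩ := Abelian.Ext.contravariant_sequence_exact₁ hS (ModuleCat.of R V) x
        (add_comm 1 (n + 1)) (@Subsingleton.elim _ h _ _)
    have := Abelian.Ext.subsingleton_of_projective S.X₂ (ModuleCat.of R V) n
    rw [← hx₂, Subsingleton.elim x₂ 0, Abelian.Ext.comp_zero]

lemma aux_main {R : Type} [CommRing R] (L : ModuleCat.{0} R) (n : ℕ) (rs : List R)
    (M : Type) [AddCommGroup M] [Module R M] (reg : RingTheory.Sequence.IsRegular M rs)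
    (h : ∀ i, n ≤ i → i ≤ n + rs.length → Subsingleton (Abelian.Ext L (ModuleCat.of R M) i)) :
    Subsingleton (Abelian.Ext L
      (ModuleCat.of R (M ⧸ (Ideal.ofList rs • ⊤ : Submodule R M))) n) := by
  induction rs generalizing M with
  | nil =>
    have e : (M ⧸ (Ideal.ofList ([] : List R) • ⊤ : Submodule R M)) ≃ₗ[R] M :=
      Submodule.quotEquivOfEqBot _ (by simp)
    have := h n le_rfl (by simp)
    exact (((Abelian.extFunctorObj L n).mapIso
      e.toModuleIso).addCommGroupIsoToAddEquiv).toEquiv.subsingleton_congr.2 this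
  | cons x rs ih =>
    rw [RingTheory.Sequence.isRegular_cons_iff] at reg
    have := ih (QuotSMulTop x M) reg.2 (by
      intro i hi hi'
      have zero1 := AddCommGrpCat.isZero_of_iff_subsingleton.mpr
        (h i hi (by simp; omega))
      have zero2 := AddCommGrpCat.isZero_of_iff_subsingleton.mpr
        (h (i + 1) (by omega) (by simp; omega))
      have hx : IsSMulRegular (ModuleCat.of R M) x := reg.1
      exact AddCommGrpCat.subsingleton_of_isZero <| ShortComplex.Exact.isZero_of_both_zeros
        ((Abelian.Ext.covariant_sequence_exact₃' L hx.smulShortComplex_shortExact) i (i + 1) rfl)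
        (zero1.eq_zero_of_src _) (zero2.eq_zero_of_tgt _))
    exact (((Abelian.extFunctorObj L n).mapIso
      (Submodule.quotOfListConsSMulTopEquivQuotSMulTopInner M x
        rs).toModuleIso).addCommGroupIsoToAddEquiv).toEquiv.subsingleton_congr.2 this

theorem statement3 (R : Type) [CommRing R] [IsNoetherianRing R] [IsLocalRing R]
    (M : Type) [AddCommGroup M] [Module R M] [Module.Finite R M]
    (s : ℕ) (hM : IsUlrich R M s)
    (L : Type) [AddCommGroup L] [Module R L] [Module.Finite R L]
    (n : ℕ) (hn : 1 ≤ n)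
    (hvan : ∀ i : ℕ, n ≤ i → i ≤ n + s → ExtVanish R L M i) :
    ProjDimFinite R L ∧ ProjDimLT R L n := by
  obtain ⟨_, _, _, rs, hlen, _, hreg, heq⟩ := hM
  obtain ⟨n, rfl⟩ : ∃ m, n = m + 1 := ⟨n - 1, by omega⟩
  suffices h : ProjDimLT R L (n + 1) from ⟨⟨_, h⟩, h⟩
  have hsub := aux_main (ModuleCat.of R L) (n + 1) rs M hreg (by
    intro i hi hi'
    obtain ⟨j, rfl⟩ : ∃ m, i = m + 1 := ⟨i - 1, by omega⟩
    exact (aux_extVanish_iff L M j).1 (hvan _ hi (by omega)))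
  have hnt : Nontrivial (M ⧸ (Ideal.ofList rs • ⊤ : Submodule R M)) :=
    Submodule.Quotient.nontrivial_iff.2 hreg.top_ne_smul.symm
  have hpd := aux_pd (M ⧸ (Ideal.ofList rs • ⊤ : Submodule R M)) (by
    rw [← Submodule.range_mkQ, ← Submodule.map_top, ← Submodule.map_smul'', heq]
    exact Submodule.mkQ_map_self _) n (ModuleCat.of R L) hsub
  intro N i hi
  obtain ⟨j, rfl⟩ : ∃ m, i = m + 1 := ⟨i - 1, by omega⟩
  exact (aux_extVanish_iff L N j).2 (HasProjectiveDimensionLT.subsingleton _ (n + 1) _ hi _)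
end

section
/- Let (R, m, k) be a commutative Noetherian local ring and let M be an Ulrich R-module of dimension s. Then M is (s+1)-Tor-rigid-test: for every finitely generated R-module N, if Tor_i^R(M, N) = 0 for all n ≤ i ≤ n+s for some integer n ≥ 1, then Tor_i^R(M, N) = 0 for all i ≥ n+s and pd_R N < n+s; in particular, if Tor_i^R(M, N) = 0 for all sufficiently large i, then pd_R N is finite. -/
open CategoryTheory IsLocalRing

section Aux

open TensorProduct CategoryTheory.Limits Pointwise

structure Syz (R : Type) [CommRing R] where
  F : ℕ → ModuleCat.{0} R
  K : ℕ → ModuleCat.{0} R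
  p : ∀ i, F i →ₗ[R] K i
  ι : ∀ i, K (i + 1) →ₗ[R] F i
  hp : ∀ i, Function.Surjective (p i)
  hι : ∀ i, Function.Injective (ι i)
  ex : ∀ i, Function.Exact (ι i) (p i)
  finF : ∀ i, Module.Finite R (F i)
  finK : ∀ i, Module.Finite R (K i)
  free : ∀ i, Module.Free R (F i)

namespace Syz

attribute [instance] finF finK free

theorem exists_syz (R : Type) [CommRing R] [IsNoetherianRing R] (N : ModuleCat.{0} R)
    (hN : Module.Finite R N) : ∃ S : Syz R, S.K 0 = N := by
  have step : ∀ A : {A : ModuleCat.{0} R // Module.Finite R A},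
      ∃ n : ℕ, ∃ f : (Fin n → R) →ₗ[R] A.1, Function.Surjective f := by
    intro A
    have := A.2
    exact Module.Finite.exists_fin' R A.1
  choose n f hf using step
  let nxt : {A : ModuleCat.{0} R // Module.Finite R A} → {A : ModuleCat.{0} R // Module.Finite R A} :=
    fun A => ⟨ModuleCat.of R (LinearMap.ker (f A)), by
      change Module.Finite R (LinearMap.ker (f A)); infer_instance⟩
  let K : ℕ → {A : ModuleCat.{0} R // Module.Finite R A} := fun i =>
    Nat.rec ⟨N, hN⟩ (fun _ A => nxt A) i
  refine ⟨{ F := fun i => ModuleCat.of R (Fin (n (K i)) → R)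
            K := fun i => (K i).1
            p := fun i => f (K i)
            ι := fun i => (LinearMap.ker (f (K i))).subtype
            hp := fun i => hf _
            hι := fun i => Subtype.val_injective
            ex := fun i => LinearMap.exact_subtype_ker_map _
            finF := fun i => by
              change Module.Finite R (Fin (n (K i)) → R); infer_instance
            finK := fun i => (K i).2
            free := fun i => by
              change Module.Free R (Fin (n (K i)) → R); infer_instance }, rfl⟩

variable {R : Type} [CommRing R] (S : Syz R)

def d (i : ℕ) : S.F (i + 1) →ₗ[R] S.F i := S.ι i ∘ₗ S.p (i + 1)

theorem d_exact (i : ℕ) : Function.Exact (S.d (i + 1)) (S.d i) := by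
  intro x
  simp only [d, LinearMap.comp_apply]
  rw [map_eq_zero_iff _ (S.hι i), S.ex (i + 1) x]
  constructor
  · rintro ⟨y, rfl⟩
    obtain ⟨z, rfl⟩ := S.hp _ y
    exact ⟨z, rfl⟩
  · rintro ⟨y, rfl⟩
    exact ⟨_, rfl⟩

theorem d_exact0 : Function.Exact (S.d 0) (S.p 0) := by
  intro x
  simp only [d]
  rw [S.ex 0 x]
  constructor
  · rintro ⟨y, rfl⟩
    obtain ⟨z, rfl⟩ := S.hp _ y
    exact ⟨z, rfl⟩
  · rintro ⟨y, rfl⟩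
    exact ⟨_, rfl⟩

noncomputable def cx : ChainComplex (ModuleCat.{0} R) ℕ :=
  ChainComplex.of S.F (fun i => ModuleCat.ofHom (S.d i)) (fun i => by
    ext x
    exact (S.d_exact i).apply_apply_eq_zero x)

theorem cx_d (i : ℕ) : S.cx.d (i + 1) i = ModuleCat.ofHom (S.d i) :=
  ChainComplex.of_d S.F (fun i => ModuleCat.ofHom (S.d i)) i

noncomputable def res : ProjectiveResolution (S.K 0) where
  complex := S.cx
  projective i := by
    change Projective (S.F i)
    rw [← IsProjective.iff_projective]
    have := S.free i
    exact Module.Projective.of_free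
  π := (ChainComplex.toSingle₀Equiv _ _).symm ⟨ModuleCat.ofHom (S.p 0), by
          rw [cx_d]
          ext x
          exact S.d_exact0.apply_apply_eq_zero x⟩
  quasiIso := ⟨fun n => by
    cases n
    · rw [ChainComplex.quasiIsoAt₀_iff, ShortComplex.quasiIso_iff_of_zeros']
      · have h : (ShortComplex.mk (ModuleCat.ofHom (S.d 0)) (ModuleCat.ofHom (S.p 0)) (by
          ext x; exact S.d_exact0.apply_apply_eq_zero x)).Exact := by
            rw [ShortComplex.ShortExact.moduleCat_exact_iff_function_exact]
            exact S.d_exact0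
        refine (ShortComplex.exact_and_epi_g_iff_of_iso ?_).2
          ⟨h, (ModuleCat.epi_iff_surjective _).2 (S.hp 0)⟩
        exact ShortComplex.isoMk (Iso.refl _) (Iso.refl _) (Iso.refl _)
          (by simp [cx_d]; rfl) (by simp; rfl)
      all_goals rfl
    · rename_i n
      rw [quasiIsoAt_iff_exactAt']
      · rw [HomologicalComplex.exactAt_iff' _ (n + 1 + 1) (n + 1) n (by simp) (by simp)]
        rw [ShortComplex.ShortExact.moduleCat_exact_iff_function_exact]
        simp only [HomologicalComplex.sc', HomologicalComplex.shortComplexFunctor', cx_d]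
        exact S.d_exact n
      · apply ChainComplex.exactAt_succ_single_obj⟩

theorem tor_iff (A : Type) [AddCommGroup A] [Module R A] (i : ℕ) :
    TorVanish R A (S.K 0) (i + 1) ↔ Function.Injective ((S.ι i).lTensor A) := by
  have h1 : TorVanish R A (S.K 0) (i + 1) ↔
      Function.Exact ((S.d (i + 1)).lTensor A) ((S.d i).lTensor A) := by
    rw [TorVanish]
    have e := S.res.isoLeftDerivedObj
      ((MonoidalCategory.tensoringLeft (ModuleCat.{0} R)).obj (ModuleCat.of R A)) (i + 1)
    rw [← ModuleCat.isZero_iff_subsingleton]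
    refine (e.isZero_iff).trans ?_
    refine (HomologicalComplex.exactAt_iff_isZero_homology _ _).symm.trans ?_
    rw [HomologicalComplex.exactAt_iff' _ (i + 1 + 1) (i + 1) i (by simp) (by simp)]
    rw [ShortComplex.ShortExact.moduleCat_exact_iff_function_exact]
    have : ∀ j, S.res.complex.d (j + 1) j = ModuleCat.ofHom (S.d j) := S.cx_d
    simp only [HomologicalComplex.sc', HomologicalComplex.shortComplexFunctor',
      Functor.mapHomologicalComplex_obj_d, this]
    exact Iff.rfl
  rw [h1]
  have hd : ∀ j, (S.d j).lTensor A = (S.ι j).lTensor A ∘ₗ (S.p (j+1)).lTensor A := by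
    intro j
    rw [← LinearMap.lTensor_comp]; rfl
  have hpA := fun j => LinearMap.lTensor_surjective A (S.hp j)
  have hex := fun j => lTensor_exact A (S.ex j) (S.hp j)
  constructor
  · intro h
    rw [injective_iff_map_eq_zero]
    intro y hy
    obtain ⟨z, rfl⟩ := hpA _ y
    have : (S.d i).lTensor A z = 0 := by rw [hd]; exact hy
    obtain ⟨w, rfl⟩ := (h z).1 this
    rw [hd]
    exact (hex _).apply_apply_eq_zero _
  · intro h x
    rw [hd, hd]
    simp only [LinearMap.comp_apply]
    rw [map_eq_zero_iff _ h, hex (i + 1) x]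
    constructor
    · rintro ⟨y, rfl⟩
      obtain ⟨z, rfl⟩ := hpA _ y
      exact ⟨z, rfl⟩
    · rintro ⟨y, rfl⟩
      exact ⟨_, rfl⟩

theorem ext_vanish (i : ℕ) (r : S.F i →ₗ[R] S.K (i + 1)) (hr : r ∘ₗ S.ι i = LinearMap.id)
    (Y : ModuleCat.{0} R) : ExtVanish R (S.K 0) Y (i + 1) := by
  rw [ExtVanish]
  have e := S.res.isoExt (R := R) (i + 1) Y
  rw [← ModuleCat.isZero_iff_subsingleton]
  refine (e.isZero_iff).2 ?_
  refine (HomologicalComplex.exactAt_iff_isZero_homology _ _).1 ?_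
  rw [HomologicalComplex.exactAt_iff' _ i (i + 1) (i + 1 + 1) (by simp) (by simp)]
  rw [ShortComplex.moduleCat_exact_iff]
  have : ∀ j, S.res.complex.d (j + 1) j = ModuleCat.ofHom (S.d j) := S.cx_d
  simp only [HomologicalComplex.sc', HomologicalComplex.shortComplexFunctor',
    ChainComplex.linearYonedaObj_d, this]
  intro (f : S.F (i + 1) ⟶ Y) hf
  have hf : ModuleCat.ofHom (S.d (i + 1)) ≫ f = 0 := hf
  have hker : LinearMap.ker (S.p (i + 1)) ≤ LinearMap.ker f.hom := by
    intro x hx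
    obtain ⟨y, rfl⟩ := (S.ex (i + 1) x).1 hx
    obtain ⟨z, rfl⟩ := S.hp _ y
    exact congrArg (fun g => g.hom z) hf
  obtain ⟨g, hg⟩ : ∃ g : S.K (i + 1) →ₗ[R] Y, g ∘ₗ S.p (i + 1) = f.hom := by
    refine ⟨(LinearMap.ker (S.p (i+1))).liftQ f.hom hker ∘ₗ
      ((S.p (i+1)).quotKerEquivOfSurjective (S.hp _)).symm.toLinearMap, ?_⟩
    ext x
    have hx : ((S.p (i+1)).quotKerEquivOfSurjective (S.hp _)).symm (S.p (i+1) x) =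
        (LinearMap.ker (S.p (i+1))).mkQ x := by
      rw [LinearEquiv.symm_apply_eq]; rfl
    simp only [LinearMap.comp_apply, LinearEquiv.coe_coe, hx]
    rfl
  refine ⟨ModuleCat.ofHom (g ∘ₗ r), ?_⟩
  change ModuleCat.ofHom (S.d i) ≫ ModuleCat.ofHom (g ∘ₗ r) = f
  ext x
  change g (r (S.ι i (S.p (i+1) x))) = f.hom x
  have := LinearMap.congr_fun hr (S.p (i+1) x)
  simp only [LinearMap.comp_apply, LinearMap.id_apply] at this
  rw [this, ← hg]; rfl

theorem tor_step (A : Type) [AddCommGroup A] [Module R A] (x : R) (hx : IsSMulRegular A x) (j : ℕ)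
    (h1 : Function.Injective ((S.ι j).lTensor A))
    (h2 : Function.Injective ((S.ι (j + 1)).lTensor A)) :
    Function.Injective ((S.ι (j + 1)).lTensor (QuotSMulTop x A)) := by
  have hA : Function.Exact (LinearMap.lsmul R A x) (Submodule.mkQ (x • (⊤ : Submodule R A))) := by
    intro y
    simp [Submodule.mem_smul_pointwise_iff_exists]
  have hs : Function.Surjective (Submodule.mkQ (x • (⊤ : Submodule R A))) :=
    Submodule.mkQ_surjective _
  have exK := rTensor_exact (S.K (j + 1 + 1)) hA hs
  have exF := rTensor_exact (S.F (j + 1)) hA hs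
  have sm : ∀ (B : Type) [AddCommGroup B] [Module R B] (t : A ⊗[R] B),
      (LinearMap.lsmul R A x).rTensor B t = x • t := by
    intro B _ _ t
    induction t with
    | zero => simp
    | add a b ha hb => simp only [map_add, ha, hb, smul_add]
    | tmul a b => simp [TensorProduct.smul_tmul']
  rw [injective_iff_map_eq_zero]
  intro b hb
  obtain ⟨a, rfl⟩ := LinearMap.rTensor_surjective (S.K (j + 1 + 1)) hs b
  have hb' : (Submodule.mkQ (x • (⊤ : Submodule R A))).rTensor (S.F (j + 1))
      ((S.ι (j + 1)).lTensor A a) = 0 := by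
    rw [← hb, ← LinearMap.comp_apply, ← LinearMap.comp_apply, LinearMap.rTensor_comp_lTensor,
      LinearMap.lTensor_comp_rTensor]
  obtain ⟨f, hf⟩ := (exF _).1 hb'
  rw [sm] at hf
  have hpf : (S.p (j + 1)).lTensor A f = 0 := by
    have e1 : x • (S.p (j + 1)).lTensor A f = 0 := by
      rw [← map_smul, hf]
      exact (lTensor_exact A (S.ex (j + 1)) (S.hp (j + 1))).apply_apply_eq_zero a
    apply h1
    have := S.free j
    have fl : Module.Flat R (S.F j) := Module.Flat.of_free
    apply IsSMulRegular.rTensor (S.F j) hx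
    simp only
    rw [← map_smul, e1, map_zero, smul_zero]
  obtain ⟨a', rfl⟩ := (lTensor_exact A (S.ex (j + 1)) (S.hp (j + 1)) f).1 hpf
  rw [← map_smul] at hf
  have := h2 hf
  subst this
  rw [← sm]
  exact exK.apply_apply_eq_zero _

theorem tor_congr {A B : Type} [AddCommGroup A] [Module R A] [AddCommGroup B] [Module R B]
    (f : A →ₗ[R] B) (g : B →ₗ[R] A) (hgf : g ∘ₗ f = LinearMap.id) (j : ℕ)
    (h : Function.Injective ((S.ι j).lTensor B)) :
    Function.Injective ((S.ι j).lTensor A) := by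
  rw [injective_iff_map_eq_zero]
  intro a ha
  have h1 : (S.ι j).lTensor B (f.rTensor _ a) = 0 := by
    have : (S.ι j).lTensor B (f.rTensor _ a) = f.rTensor _ ((S.ι j).lTensor A a) := by
      rw [← LinearMap.comp_apply, ← LinearMap.comp_apply, LinearMap.rTensor_comp_lTensor,
        LinearMap.lTensor_comp_rTensor]
    rw [this, ha, map_zero]
  have h2 := (map_eq_zero_iff _ h).1 h1
  have h3 : g.rTensor _ (f.rTensor (S.K (j + 1)) a) = a := by
    rw [← LinearMap.comp_apply, ← LinearMap.rTensor_comp, hgf, LinearMap.rTensor_id]; rfl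
  rw [← h3, h2, map_zero]

theorem tor_list (rs : List R) : ∀ (A : Type) [AddCommGroup A] [Module R A] (j : ℕ),
    RingTheory.Sequence.IsWeaklyRegular A rs →
    (∀ i, j ≤ i → i ≤ j + rs.length → Function.Injective ((S.ι i).lTensor A)) →
    Function.Injective ((S.ι (j + rs.length)).lTensor
      (A ⧸ (Ideal.ofList rs • ⊤ : Submodule R A))) := by
  induction rs with
  | nil =>
    intro A _ _ j _ h
    let e : (A ⧸ (Ideal.ofList ([] : List R) • ⊤ : Submodule R A)) ≃ₗ[R] A :=
      Submodule.quotEquivOfEqBot _ (by simp)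
    refine S.tor_congr e.toLinearMap e.symm.toLinearMap (by ext; simp) _ (h _ (by simp) (by simp))
  | cons x rs ih =>
    intro A _ _ j hreg h
    rw [RingTheory.Sequence.isWeaklyRegular_cons_iff] at hreg
    have := ih (QuotSMulTop x A) (j + 1) hreg.2 (fun i h1 h2 => by
      obtain ⟨i, rfl⟩ : ∃ i', i = i' + 1 := ⟨i - 1, by omega⟩
      apply S.tor_step A x hreg.1
      · exact h _ (by omega) (by simp; omega)
      · exact h _ (by omega) (by simp; omega))
    let e := Submodule.quotOfListConsSMulTopEquivQuotSMulTopInner A x rs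
    have e2 : j + (x :: rs).length = j + 1 + rs.length := by simp; omega
    rw [e2]
    exact S.tor_congr e.toLinearMap e.symm.toLinearMap (by ext; simp) _ this

theorem split_of_ulrich [IsLocalRing R] {M : Type} [AddCommGroup M] [Module R M]
    [Module.Finite R M] [Nontrivial M] (j : ℕ)
    (h : Function.Injective ((S.ι j).lTensor (M ⧸ (maximalIdeal R • ⊤ : Submodule R M)))) :
    ∃ r, r ∘ₗ S.ι j = LinearMap.id := by
  have := S.free j
  rw [IsLocalRing.split_injective_iff_lTensor_residueField_injective]
  let e : (ResidueField R ⊗[R] M) ≃ₗ[R] (M ⧸ (maximalIdeal R • ⊤ : Submodule R M)) :=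
    TensorProduct.quotTensorEquivQuotSMul M (maximalIdeal R)
  have h' := S.tor_congr e.toLinearMap e.symm.toLinearMap (by ext; simp) _ h
  have hnt : Nontrivial (ResidueField R ⊗[R] M) := by
    rw [← not_subsingleton_iff_nontrivial, IsLocalRing.subsingleton_tensorProduct,
      not_subsingleton_iff_nontrivial]
    infer_instance
  obtain ⟨v, hv⟩ := exists_ne (0 : ResidueField R ⊗[R] M)
  have hinj : LinearMap.ker (LinearMap.toSpanSingleton (ResidueField R)
      (ResidueField R ⊗[R] M) v) = ⊥ := LinearMap.ker_toSpanSingleton _ hv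
  obtain ⟨g, hg⟩ := LinearMap.exists_leftInverse_of_injective _ hinj
  refine S.tor_congr ((LinearMap.toSpanSingleton (ResidueField R)
      (ResidueField R ⊗[R] M) v).restrictScalars R) (g.restrictScalars R) ?_ _ h'
  ext
  exact LinearMap.congr_fun hg _

theorem split_ge (j : ℕ) (h : ∃ r, r ∘ₗ S.ι j = LinearMap.id) (i : ℕ) (hi : j ≤ i) :
    ∃ r, r ∘ₗ S.ι i = LinearMap.id := by
  induction i, hi using Nat.le_induction with
  | base => exact h
  | succ i hi ih =>
    obtain ⟨r, hr⟩ := ih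
    have := S.free i
    have hP : Module.Projective R (S.F i) := Module.Projective.of_free
    have : Module.Projective R (S.K (i + 1)) := Module.Projective.of_split (S.ι i) r hr
    have t := (Function.Exact.split_tfae (S.ex (i+1)) (S.hι (i+1)) (S.hp (i+1))).out 0 1
    exact t.1 (Module.projective_lifting_property _ _ (S.hp (i+1)))

theorem lTensor_inj_of_split (A : Type) [AddCommGroup A] [Module R A] (i : ℕ)
    (h : ∃ r, r ∘ₗ S.ι i = LinearMap.id) : Function.Injective ((S.ι i).lTensor A) := by
  obtain ⟨r, hr⟩ := h
  refine Function.HasLeftInverse.injective ⟨r.lTensor A, fun x => ?_⟩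
  rw [← LinearMap.comp_apply, ← LinearMap.lTensor_comp, hr, LinearMap.lTensor_id]; rfl

end Syz

theorem ulrich_aux (R : Type) [CommRing R] [IsNoetherianRing R] [IsLocalRing R]
    (M : Type) [AddCommGroup M] [Module R M] [Module.Finite R M]
    (s : ℕ) (hM : IsUlrich R M s) (N : ModuleCat R) (hN : Module.Finite R N) (n : ℕ) (hn : 1 ≤ n)
    (h : ∀ i : ℕ, n ≤ i → i ≤ n + s → TorVanish R M N i) :
    (∀ i : ℕ, n + s ≤ i → TorVanish R M N i) ∧ ProjDimLT R N (n + s) := by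
  obtain ⟨S, rfl⟩ := Syz.exists_syz R N hN
  obtain ⟨hnt, -, -, rs, rfl, -, hreg, hm⟩ := hM
  obtain ⟨j, rfl⟩ : ∃ j, n = j + 1 := ⟨n - 1, by omega⟩
  have key := S.tor_list rs M j hreg.toIsWeaklyRegular (fun i h1 h2 =>
    (S.tor_iff M i).1 (h (i + 1) (by omega) (by omega)))
  rw [← hm] at key
  have sp := S.split_ge _ (S.split_of_ulrich _ key)
  refine ⟨fun i hi => ?_, fun Y i hi => ?_⟩
  · obtain ⟨i, rfl⟩ : ∃ j, i = j + 1 := ⟨i - 1, by omega⟩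
    exact (S.tor_iff M i).2 (S.lTensor_inj_of_split M i (sp i (by omega)))
  · obtain ⟨i, rfl⟩ : ∃ j, i = j + 1 := ⟨i - 1, by omega⟩
    obtain ⟨r, hr⟩ := sp i (by omega)
    exact S.ext_vanish i r hr Y

end Aux

theorem statement4 (R : Type) [CommRing R] [IsNoetherianRing R] [IsLocalRing R]
    (M : Type) [AddCommGroup M] [Module R M] [Module.Finite R M]
    (s : ℕ) (hM : IsUlrich R M s) :
    (∀ (N : ModuleCat R), Module.Finite R N → ∀ n : ℕ, 1 ≤ n →
      (∀ i : ℕ, n ≤ i → i ≤ n + s → TorVanish R M N i) →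
        (∀ i : ℕ, n + s ≤ i → TorVanish R M N i) ∧ ProjDimLT R N (n + s)) ∧
    (∀ (N : ModuleCat R), Module.Finite R N →
      (∃ n₀ : ℕ, ∀ i : ℕ, n₀ ≤ i → TorVanish R M N i) → ProjDimFinite R N) := by

  refine ⟨fun N hN n hn h => ulrich_aux R M s hM N hN n hn h, ?_⟩
  rintro N hN ⟨n₀, h⟩
  exact ⟨_, (ulrich_aux R M s hM N hN (n₀ + 1) (by omega)
    (fun i hi _ => h i (by omega))).2⟩
end

section
/- Let (R, m, k) be a commutative Noetherian local ring and let M be an Ulrich R-module of dimension s. If L is a finitely generated R-module such that Ext_R^i(L, M) = 0 for all 1 ≤ i ≤ s+1, then L is a free R-module. -/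
open CategoryTheory IsLocalRing

section Aux
open TensorProduct Pointwise

/-- cocycles are coboundaries -/
def CoEx (R : Type) [CommRing R] {A B C : Type} [AddCommGroup A] [Module R A]
    [AddCommGroup B] [Module R B] [AddCommGroup C] [Module R C]
    (d₂ : A →ₗ[R] B) (d₁ : B →ₗ[R] C) (M : Type) [AddCommGroup M] [Module R M] : Prop :=
  ∀ f : B →ₗ[R] M, f ∘ₗ d₂ = 0 → ∃ g : C →ₗ[R] M, f = g ∘ₗ d₁

lemma aux_coEx (R : Type) [CommRing R] (L M : Type) [AddCommGroup L] [Module R L]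
    [AddCommGroup M] [Module R M] (P : ProjectiveResolution (ModuleCat.of R L)) (n : ℕ)
    (h : ExtVanish R L M (n + 1)) :
    CoEx R (P.complex.d (n + 2) (n + 1)).hom (P.complex.d (n + 1) n).hom M := by
  intro f hf
  have h1 : Limits.IsZero ((P.complex.linearYonedaObj R (ModuleCat.of R M)).homology (n + 1)) := by
    refine Limits.IsZero.of_iso ?_ (P.isoExt (R := R) (n + 1) (ModuleCat.of R M)).symm
    have : Subsingleton _ := h
    exact ModuleCat.isZero_of_subsingleton _
  rw [← HomologicalComplex.exactAt_iff_isZero_homology,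
    HomologicalComplex.exactAt_iff' _ n (n + 1) (n + 2) (by simp) (by simp),
    ShortComplex.moduleCat_exact_iff] at h1
  obtain ⟨g, hg⟩ := h1 (ModuleCat.ofHom f : P.complex.X (n + 1) ⟶ ModuleCat.of R M) (by
    change P.complex.d (n + 2) (n + 1) ≫ ModuleCat.ofHom f = 0
    ext x
    exact LinearMap.congr_fun hf x)
  have hg' : P.complex.d (n + 1) n ≫ (show P.complex.X n ⟶ ModuleCat.of R M from g)
    = ModuleCat.ofHom f := hg
  refine ⟨(show P.complex.X n ⟶ ModuleCat.of R M from g).hom, ?_⟩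
  rw [← ModuleCat.hom_comp, hg']
  rfl

lemma aux_mod (R : Type) [CommRing R] {A B C D : Type} [AddCommGroup A] [Module R A]
    [AddCommGroup B] [Module R B] [AddCommGroup C] [Module R C] [AddCommGroup D] [Module R D]
    [Module.Projective R C]
    (d₃ : A →ₗ[R] B) (d₂ : B →ₗ[R] C) (d₁ : C →ₗ[R] D) (h32 : d₂ ∘ₗ d₃ = 0)
    (M : Type) [AddCommGroup M] [Module R M] (x : R) (hx : IsSMulRegular M x)
    (h1 : CoEx R d₂ d₁ M) (h2 : CoEx R d₃ d₂ M) : CoEx R d₂ d₁ (QuotSMulTop x M) := by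
  intro f hf
  obtain ⟨F, hF⟩ := Module.projective_lifting_property
    (Submodule.mkQ (x • (⊤ : Submodule R M))) f (Submodule.mkQ_surjective _)
  have hinj : Function.Injective (LinearMap.lsmul R M x) := hx
  have hmem : ∀ b, (F (d₂ b)) ∈ LinearMap.range (LinearMap.lsmul R M x) := by
    intro b
    have : Submodule.mkQ (x • (⊤ : Submodule R M)) (F (d₂ b)) = 0 := by
      have := LinearMap.congr_fun hf b
      rw [← hF] at this
      exact this
    rw [Submodule.mkQ_apply, Submodule.Quotient.mk_eq_zero] at this
    obtain ⟨m, -, hm⟩ := this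
    exact ⟨m, hm⟩
  let e := LinearEquiv.ofInjective (LinearMap.lsmul R M x) hinj
  let g : B →ₗ[R] M := e.symm.toLinearMap ∘ₗ LinearMap.codRestrict _ (F ∘ₗ d₂) hmem
  have hg : ∀ b, x • g b = F (d₂ b) := by
    intro b
    have := congrArg Subtype.val (e.apply_symm_apply (LinearMap.codRestrict _ (F ∘ₗ d₂) hmem b))
    exact this
  obtain ⟨h, hh⟩ := h2 g (by
    ext a
    apply hx
    change x • g (d₃ a) = x • (0 : M)
    have : d₂ (d₃ a) = 0 := LinearMap.congr_fun h32 a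
    rw [hg, this]; simp)
  obtain ⟨k, hk⟩ := h1 (F - x • h) (by
    ext b
    have := LinearMap.congr_fun hh b
    simp only [LinearMap.comp_apply] at this
    simp [← hg, this])
  refine ⟨Submodule.mkQ _ ∘ₗ k, ?_⟩
  rw [LinearMap.comp_assoc, ← hk, ← hF]
  ext c
  simp only [LinearMap.comp_apply, LinearMap.sub_apply, map_sub, LinearMap.smul_apply]
  rw [eq_comm, sub_eq_self, Submodule.mkQ_apply, Submodule.Quotient.mk_eq_zero]
  exact ⟨h c, trivial, rfl⟩

lemma aux_iter (R : Type) [CommRing R] {X : ℕ → Type} [∀ i, AddCommGroup (X i)]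
    [∀ i, Module R (X i)] [∀ i, Module.Projective R (X i)]
    (d : ∀ i, X (i + 1) →ₗ[R] X i) (hd : ∀ i, d i ∘ₗ d (i + 1) = 0) (rs : List R) :
    ∀ (M : Type) [AddCommGroup M] [Module R M],
    RingTheory.Sequence.IsWeaklyRegular M rs →
    (∀ i ≤ rs.length, CoEx R (d (i + 1)) (d i) M) →
    CoEx R (d 1) (d 0) (M ⧸ (Ideal.ofList rs • ⊤ : Submodule R M)) := by
  have key : ∀ (M N : Type) [AddCommGroup M] [Module R M] [AddCommGroup N] [Module R N]
      (e : M ≃ₗ[R] N), CoEx R (d 1) (d 0) M → CoEx R (d 1) (d 0) N := by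
    intro M N _ _ _ _ e h f hf
    obtain ⟨g, hg⟩ := h (e.symm.toLinearMap ∘ₗ f) (by rw [LinearMap.comp_assoc, hf]; simp)
    refine ⟨e.toLinearMap ∘ₗ g, ?_⟩
    rw [LinearMap.comp_assoc, ← hg]
    ext; simp
  induction rs with
  | nil =>
    intro M _ _ _ h
    refine key M _ ?_ (h 0 le_rfl)
    exact (Submodule.quotEquivOfEqBot _ (by simp)).symm
  | cons r rs ih =>
    intro M _ _ hr h
    rw [RingTheory.Sequence.isWeaklyRegular_cons_iff] at hr
    refine key _ _ (Submodule.quotOfListConsSMulTopEquivQuotSMulTopInner M r rs).symm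
      (ih _ hr.2 fun i hi => ?_)
    exact aux_mod R (d (i + 2)) (d (i + 1)) (d i) (hd _) M r hr.1
      (h i (by simp; omega)) (h (i + 1) (by simp; omega))

lemma aux_free (R : Type) [CommRing R] [IsNoetherianRing R] [IsLocalRing R]
    (N : Type) [AddCommGroup N] [Module R N] [Nontrivial N]
    (hN : ∀ r ∈ maximalIdeal R, ∀ n : N, r • n = 0)
    {L F K : Type} [AddCommGroup L] [Module R L] [AddCommGroup F] [Module R F]
    [AddCommGroup K] [Module R K] [Module.Finite R F] [Module.Free R F] [Module.Finite R K]
    (i : K →ₗ[R] F) (p : F →ₗ[R] L) (hp : Function.Surjective p) (hip : Function.Exact i p)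
    (hext : ∀ φ : K →ₗ[R] N, ∃ ψ : F →ₗ[R] N, φ = ψ ∘ₗ i) : Module.Free R L := by
  refine Module.free_of_lTensor_residueField_injective i p hp hip ?_
  rw [injective_iff_map_eq_zero]
  intro z hz
  rw [← Module.forall_dual_apply_eq_zero_iff (ResidueField R)]
  intro Λ
  obtain ⟨n₀, hn₀⟩ := exists_ne (0 : N)
  let τ : ResidueField R →ₗ[R] N :=
    Submodule.liftQ (maximalIdeal R) (LinearMap.toSpanSingleton R N n₀)
      (fun r hr => by simpa using hN r hr n₀)
  have hτ : ∀ c, τ c = 0 → c = 0 := by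
    intro c hc
    obtain ⟨r, rfl⟩ := IsLocalRing.residue_surjective c
    have hc' : r • n₀ = 0 := hc
    rw [IsLocalRing.residue_eq_zero_iff]
    by_contra hr
    have : IsUnit r := by simpa using hr
    exact hn₀ ((this.smul_eq_zero).1 hc')
  apply hτ
  let lam : ResidueField R ⊗[R] K →ₗ[R] N := τ ∘ₗ Λ.restrictScalars R
  obtain ⟨ψ, hψ⟩ := hext (lam ∘ₗ TensorProduct.mk R (ResidueField R) K 1)
  let b : ResidueField R →ₗ[R] (F →ₗ[R] N) :=
    Submodule.liftQ (maximalIdeal R) (LinearMap.toSpanSingleton R (F →ₗ[R] N) ψ)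
      (fun r hr => by
        rw [LinearMap.mem_ker]
        ext y
        simpa using hN r hr (ψ y))
  have hb : lam = TensorProduct.lift b ∘ₗ i.lTensor (ResidueField R) := by
    apply TensorProduct.ext'
    intro c x
    obtain ⟨r, rfl⟩ := IsLocalRing.residue_surjective c
    have h1 : (residue R r) ⊗ₜ[R] x = r • ((1 : ResidueField R) ⊗ₜ[R] x) := by
      rw [TensorProduct.smul_tmul', Algebra.smul_def, mul_one]; rfl
    have h2 : lam ((1 : ResidueField R) ⊗ₜ[R] x) = ψ (i x) := LinearMap.congr_fun hψ x
    have h3 : b (residue R r) = r • ψ := rfl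
    rw [h1, map_smul, h2, ← h1]
    simp [h3]
  change lam z = 0
  rw [hb, LinearMap.comp_apply, hz, map_zero]

lemma aux_transfer (R : Type) [CommRing R] (N : Type) [AddCommGroup N] [Module R N]
    {L F P₀ P₁ P₂ : Type} [AddCommGroup L] [Module R L] [AddCommGroup F] [Module R F]
    [AddCommGroup P₀] [Module R P₀] [AddCommGroup P₁] [Module R P₁] [AddCommGroup P₂] [Module R P₂]
    [Module.Projective R F] [Module.Projective R P₀]
    (d₁ : P₂ →ₗ[R] P₁) (d₀ : P₁ →ₗ[R] P₀) (π : P₀ →ₗ[R] L) (h1 : d₀ ∘ₗ d₁ = 0)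
    (h0 : π ∘ₗ d₀ = 0) (hex : Function.Exact d₀ π) (hπ : Function.Surjective π)
    (p : F →ₗ[R] L) (hp : Function.Surjective p) (h : CoEx R d₁ d₀ N)
    (φ : LinearMap.ker p →ₗ[R] N) : ∃ ψ : F →ₗ[R] N, φ = ψ ∘ₗ (LinearMap.ker p).subtype := by
  obtain ⟨a, ha⟩ := Module.projective_lifting_property p π hp
  obtain ⟨b, hb⟩ := Module.projective_lifting_property π p hπ
  have ha' : ∀ y, p (a y) = π y := LinearMap.congr_fun ha
  have hb' : ∀ y, π (b y) = p y := LinearMap.congr_fun hb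
  have h0' : ∀ y, π (d₀ y) = 0 := LinearMap.congr_fun h0
  have h1' : ∀ y, d₀ (d₁ y) = 0 := LinearMap.congr_fun h1
  let α : P₁ →ₗ[R] LinearMap.ker p := LinearMap.codRestrict _ (a ∘ₗ d₀) (by
    intro c; simp [ha', h0'])
  obtain ⟨g, hg⟩ := h (φ ∘ₗ α) (by
    ext c
    have : α (d₁ c) = 0 := by
      apply Subtype.ext
      change a (d₀ (d₁ c)) = 0
      simp [h1']
    simp [this])
  let ε : F →ₗ[R] LinearMap.ker p := LinearMap.codRestrict _ (a ∘ₗ b - LinearMap.id) (by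
    intro c; simp [ha', hb'])
  refine ⟨g ∘ₗ b - φ ∘ₗ ε, ?_⟩
  ext x
  obtain ⟨y, hy⟩ := (hex (b x)).1 (by rw [hb']; exact x.2)
  have e1 : g (b x) = φ (α y) := by rw [← hy]; exact (LinearMap.congr_fun hg y).symm
  have e2 : α y - ε x = x := by
    apply Subtype.ext
    change a (d₀ y) - (a (b x) - x) = x
    rw [hy]; abel
  simp only [LinearMap.comp_apply, LinearMap.sub_apply, Submodule.subtype_apply]
  rw [e1, ← map_sub, e2]

end Aux

theorem statement5 (R : Type) [CommRing R] [IsNoetherianRing R] [IsLocalRing R]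
    (M : Type) [AddCommGroup M] [Module R M] [Module.Finite R M]
    (s : ℕ) (hM : IsUlrich R M s)
    (L : Type) [AddCommGroup L] [Module R L] [Module.Finite R L]
    (hvan : ∀ i : ℕ, 1 ≤ i → i ≤ s + 1 → ExtVanish R L M i) :
    Module.Free R L := by
  obtain ⟨-, -, -, rs, hlen, -, hreg, hmM⟩ := hM
  have P : ProjectiveResolution (ModuleCat.of R L) := projectiveResolution _
  have hproj : ∀ i, Module.Projective R (P.complex.X i) := fun i =>
    (IsProjective.iff_projective (P.complex.X i)).2 (P.projective i)
  have hc := aux_iter R (X := fun i => P.complex.X i) (fun i => (P.complex.d (i + 1) i).hom)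
    (fun i => by rw [← ModuleCat.hom_comp]; simp) rs M hreg.toIsWeaklyRegular
    (fun i hi => aux_coEx R L M P i (hvan (i + 1) (by omega) (by omega)))
  have hnt : Nontrivial (M ⧸ (Ideal.ofList rs • ⊤ : Submodule R M)) :=
    Submodule.Quotient.nontrivial_iff.2 hreg.top_ne_smul.symm
  obtain ⟨n, p, hp⟩ := Module.Finite.exists_fin' R L
  let π : P.complex.X 0 →ₗ[R] L := (P.π.f 0).hom
  have hex : Function.Exact (P.complex.d 1 0).hom π :=
    (ShortComplex.ShortExact.moduleCat_exact_iff_function_exact _).1 P.exact₀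
  have hπ : Function.Surjective π :=
    (ModuleCat.epi_iff_surjective (P.π.f 0)).1 inferInstance
  refine aux_free R (M ⧸ (Ideal.ofList rs • ⊤ : Submodule R M)) ?_
    (LinearMap.ker p).subtype p hp (LinearMap.exact_subtype_ker_map p) ?_
  · intro r hr y
    obtain ⟨y, rfl⟩ := Submodule.Quotient.mk_surjective _ y
    rw [← Submodule.Quotient.mk_smul, Submodule.Quotient.mk_eq_zero, ← hmM]
    exact Submodule.smul_mem_smul hr trivial
  · intro φ
    exact aux_transfer R _ _ _ π (by rw [← ModuleCat.hom_comp]; simp)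
      hex.linearMap_comp_eq_zero hex hπ p hp hc φ
end

section
/- Let (R, m) be a reduced commutative Noetherian local ring which is not an integral domain. Then the set Min(R) of minimal primes of R has more than one element; moreover, for any non-empty proper subset S ⊊ Min(R), setting I = ∩_{p ∈ S} p and J = ∩_{q ∈ Min(R)∖S} q, the ideals I and J are nonzero proper ideals of R, I ∩ J = 0, and both R/I and R/J have positive depth. -/
open CategoryTheory IsLocalRing

theorem aux_mem {R : Type} [CommRing R] [IsNoetherianRing R] {S : Set (Ideal R)}
    (hS : S ⊆ minimalPrimes R) {q : Ideal R} (hq : q ∈ minimalPrimes R) (hle : sInf S ≤ q) :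
    q ∈ S := by
  have fin : S.Finite := (minimalPrimes.finite_of_isNoetherianRing R).subset hS
  have hqp : q.IsPrime := hq.1.1
  rw [← fin.coe_toFinset, ← Finset.inf_id_eq_sInf, hqp.inf_le'] at hle
  obtain ⟨p, hp, hpq⟩ := hle
  have hp' : p ∈ S := by simpa using hp
  have hpq' : p ≤ q := hpq
  have : p = q := le_antisymm hpq' (hq.2 (hS hp').1 hpq')
  exact this ▸ hp'

theorem aux_reg {R : Type} [CommRing R] [IsNoetherianRing R] [IsLocalRing R]
    (hm : maximalIdeal R ∉ minimalPrimes R) {S : Set (Ideal R)}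
    (hS : S ⊆ minimalPrimes R) :
    ∃ x ∈ maximalIdeal R, IsSMulRegular (R ⧸ sInf S) x := by
  have fin : S.Finite := (minimalPrimes.finite_of_isNoetherianRing R).subset hS
  have h1 : ¬ ((maximalIdeal R : Set R) ⊆ ⋃ p ∈ S, (p : Set R)) := by
    intro h
    obtain ⟨p, hp, hle⟩ := (Ideal.subset_union_prime_finite fin (f := id) 0 0
      fun p h _ _ ↦ (hS h).1.1).1 h
    have hpp : p.IsPrime := (hS hp).1.1
    have : maximalIdeal R = p := le_antisymm hle (le_maximalIdeal hpp.ne_top)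
    exact hm (this ▸ hS hp)
  obtain ⟨x, hx, hxS⟩ := Set.not_subset.1 h1
  refine ⟨x, hx, ?_⟩
  rw [isSMulRegular_iff_right_eq_zero_of_smul]
  intro y hy
  obtain ⟨r, rfl⟩ := Ideal.Quotient.mk_surjective y
  have hy' : Ideal.Quotient.mk (sInf S) (x * r) = 0 := hy
  rw [Ideal.Quotient.eq_zero_iff_mem, Submodule.mem_sInf] at hy' ⊢
  intro p hp
  have hpp : Ideal.IsPrime p := (hS hp).1.1
  refine (hpp.mem_or_mem (hy' p hp)).resolve_left fun h => hxS ?_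
  simp only [Set.mem_iUnion]
  exact ⟨p, hp, h⟩

theorem statement7 (R : Type) [CommRing R] [IsNoetherianRing R] [IsLocalRing R]
    [IsReduced R] (hnd : ¬ IsDomain R) :
    (minimalPrimes R).Nontrivial ∧
    ∀ S : Set (Ideal R), S ⊆ minimalPrimes R → S.Nonempty → S ≠ minimalPrimes R →
      (sInf S ≠ ⊥ ∧ sInf S ≠ ⊤) ∧
      (sInf (minimalPrimes R \ S) ≠ ⊥ ∧ sInf (minimalPrimes R \ S) ≠ ⊤) ∧
      sInf S ⊓ sInf (minimalPrimes R \ S) = ⊥ ∧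
      (∃ x ∈ maximalIdeal R, IsSMulRegular (R ⧸ sInf S) x) ∧
      (∃ x ∈ maximalIdeal R, IsSMulRegular (R ⧸ sInf (minimalPrimes R \ S)) x) := by
  have h0 : sInf (minimalPrimes R) = ⊥ := by
    have := Ideal.sInf_minimalPrimes (I := (⊥ : Ideal R))
    rw [(Ideal.isRadical_bot (R := R)).radical] at this
    exact this
  have htop : ∀ S : Set (Ideal R), S ⊆ minimalPrimes R → S.Nonempty → sInf S ≠ ⊤ := by
    rintro S hS ⟨p, hp⟩ h
    have hpp : p.IsPrime := (hS hp).1.1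
    exact hpp.ne_top (top_le_iff.1 (h ▸ sInf_le hp))
  have hne : (minimalPrimes R).Nonempty := by
    rw [Set.nonempty_iff_ne_empty]
    intro h
    rw [h, sInf_empty] at h0
    exact top_ne_bot h0
  have hnt : (minimalPrimes R).Nontrivial := by
    rw [← Set.not_subsingleton_iff]
    intro hs
    obtain ⟨p, hp⟩ := hne
    rw [hs.eq_singleton_of_mem hp, sInf_singleton] at h0
    have hpp : p.IsPrime := hp.1.1
    subst h0
    exact hnd (IsDomain.of_bot_isPrime R)
  have hm : maximalIdeal R ∉ minimalPrimes R := by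
    intro hm
    obtain ⟨p, hp, hpm⟩ := hnt.exists_ne (maximalIdeal R)
    have hpp : p.IsPrime := hp.1.1
    have hle := le_maximalIdeal hpp.ne_top
    exact hpm (le_antisymm hle (hm.2 hp.1 hle))
  refine ⟨hnt, fun S hS hSn hSne => ?_⟩
  have hD : minimalPrimes R \ S ⊆ minimalPrimes R := Set.sdiff_subset
  have hDn : (minimalPrimes R \ S).Nonempty :=
    Set.sdiff_nonempty.2 fun h => hSne (hS.antisymm h)
  refine ⟨⟨?_, htop S hS hSn⟩, ⟨?_, htop _ hD hDn⟩, ?_, aux_reg hm hS, aux_reg hm hD⟩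
  · intro h
    obtain ⟨q, hq, hqS⟩ := hDn
    exact hqS (aux_mem hS hq (h ▸ bot_le))
  · intro h
    obtain ⟨q, hq⟩ := hSn
    exact (aux_mem hD (hS hq) (h ▸ bot_le)).2 hq
  · rw [← sInf_union, Set.union_sdiff_cancel hS, h0]
end

section
/- Let (R, m, k) be a reduced Gorenstein (i.e., R has finite injective dimension as an R-module) commutative Noetherian local ring of Krull dimension 1 which is not an integral domain, and assume R has minimal multiplicity in the sense that m² = xm for some R-regular element x ∈ m. Let S ⊊ Min(R) be a non-empty proper subset, and set I = ∩_{p ∈ S} p and J = ∩_{q ∈ Min(R)∖S} q. Then Tor_1^R(R/I, R/J) = 0 while Tor_2^R(R/I, R/J) ≠ 0; in particular, neither R/I nor R/J is Tor-rigid. -/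
open CategoryTheory IsLocalRing

open TensorProduct in
lemma tensor_exact_iff {R : Type} [CommRing R] (I : Ideal R) {A B C : Type}
    [AddCommGroup A] [Module R A] [AddCommGroup B] [Module R B] [AddCommGroup C] [Module R C]
    (f : A →ₗ[R] B) (g : B →ₗ[R] C) :
    (∀ z : (R ⧸ I) ⊗[R] B, g.lTensor (R ⧸ I) z = 0 → ∃ w, f.lTensor (R ⧸ I) w = z) ↔
    ∀ p : B, g p ∈ I • (⊤ : Submodule R C) → ∃ q : A, p - f q ∈ I • (⊤ : Submodule R B) := by
  have h0 : ∀ (M : Type) [AddCommGroup M] [Module R M] (z : (R ⧸ I) ⊗[R] M),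
      ∃ m : M, z = (1 : R ⧸ I) ⊗ₜ[R] m := by
    intro M _ _ z
    obtain ⟨m, hm⟩ := Submodule.Quotient.mk_surjective _ (quotTensorEquivQuotSMul M I z)
    refine ⟨m, ?_⟩
    rw [← quotTensorEquivQuotSMul_symm_mk, hm, LinearEquiv.symm_apply_apply]
  have h1 : ∀ (M : Type) [AddCommGroup M] [Module R M] (m : M),
      (1 : R ⧸ I) ⊗ₜ[R] m = 0 ↔ m ∈ I • (⊤ : Submodule R M) := by
    intro M _ _ m
    rw [← (quotTensorEquivQuotSMul M I).map_eq_zero_iff, quotTensorEquivQuotSMul_mk_one_tmul,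
      Submodule.Quotient.mk_eq_zero]
  constructor
  · intro h p hp
    obtain ⟨w, hw⟩ := h (1 ⊗ₜ p) (by rw [LinearMap.lTensor_tmul, h1]; exact hp)
    obtain ⟨q, rfl⟩ := h0 A w
    refine ⟨q, ?_⟩
    rw [← h1, TensorProduct.tmul_sub, ← hw, LinearMap.lTensor_tmul, sub_self]
  · intro h z hz
    obtain ⟨p, rfl⟩ := h0 B z
    rw [LinearMap.lTensor_tmul, h1] at hz
    obtain ⟨q, hq⟩ := h p hz
    refine ⟨1 ⊗ₜ q, ?_⟩
    rw [← h1, TensorProduct.tmul_sub, sub_eq_zero] at hq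
    rw [LinearMap.lTensor_tmul, hq]

lemma torVanish_iff {R : Type} [CommRing R] (I : Ideal R) {N : Type} [AddCommGroup N] [Module R N]
    (P : ProjectiveResolution (ModuleCat.of R N)) (n : ℕ) :
    TorVanish R (R ⧸ I) N (n + 1) ↔
    ∀ p : P.complex.X (n + 1), (P.complex.d (n + 1) n).hom p ∈
      I • (⊤ : Submodule R (P.complex.X n)) →
      ∃ q : P.complex.X (n + 2), p - (P.complex.d (n + 2) (n + 1)).hom q ∈
        I • (⊤ : Submodule R (P.complex.X (n + 1))) := by
  rw [← tensor_exact_iff]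
  unfold TorVanish
  rw [← ModuleCat.isZero_iff_subsingleton, Tor_obj,
    (P.isoLeftDerivedObj ((MonoidalCategory.tensoringLeft (ModuleCat R)).obj
      (ModuleCat.of R (R ⧸ I))) (n + 1)).isZero_iff]
  change Limits.IsZero (HomologicalComplex.homology _ _) ↔ _
  rw [← HomologicalComplex.exactAt_iff_isZero_homology,
    HomologicalComplex.exactAt_iff' _ (n + 2) (n + 1) n (by simp) (by simp),
    ShortComplex.moduleCat_exact_iff]
  rfl

lemma key1 {R : Type} [CommRing R] (I J : Ideal R) (hIJ : I ⊓ J = ⊥) {P2 P1 P0 : Type}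
    [AddCommGroup P2] [Module R P2] [AddCommGroup P1] [Module R P1] [AddCommGroup P0] [Module R P0]
    (d2 : P2 →ₗ[R] P1) (d1 : P1 →ₗ[R] P0) (e : P0 →ₗ[R] R ⧸ J)
    (hed : ∀ p, e (d1 p) = 0)
    (h1 : ∀ p, d1 p = 0 → ∃ q, d2 q = p) (h0 : ∀ p, e p = 0 → ∃ q, d1 q = p)
    (he : Function.Surjective e) (p : P1) (hp : d1 p ∈ I • (⊤ : Submodule R P0)) :
    ∃ q : P2, p - d2 q ∈ I • (⊤ : Submodule R P1) := by
  obtain ⟨e0, he0⟩ := he 1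
  have key : ∀ y ∈ I • (⊤ : Submodule R P0),
      ∃ b ∈ I, ∃ p' ∈ I • (⊤ : Submodule R P1), y = b • e0 + d1 p' := by
    intro y hy
    refine Submodule.smul_induction_on hy ?_ ?_
    · intro i hi n _
      obtain ⟨a, ha⟩ := Ideal.Quotient.mk_surjective (e n)
      obtain ⟨q, hq⟩ := h0 (n - a • e0) (by
        rw [map_sub, map_smul, he0, ← ha, Algebra.smul_def, mul_one]; exact sub_self _)
      refine ⟨i * a, I.mul_mem_right _ hi, i • q, Submodule.smul_mem_smul hi trivial, ?_⟩
      rw [map_smul, hq, smul_sub, mul_smul]; abel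
    · rintro _ _ ⟨b, hb, p, hp, rfl⟩ ⟨b', hb', p', hp', rfl⟩
      refine ⟨b + b', add_mem hb hb', p + p', add_mem hp hp', ?_⟩
      rw [map_add, add_smul]; abel
  obtain ⟨b, hb, p', hp', h⟩ := key _ hp
  have hbJ : b ∈ J := by
    have h2 := hed p
    rw [h, map_add, hed, add_zero, map_smul, he0, Algebra.smul_def, mul_one] at h2
    exact Ideal.Quotient.eq_zero_iff_mem.mp h2
  have hb0 : b = 0 := by
    have : b ∈ I ⊓ J := ⟨hb, hbJ⟩
    rwa [hIJ] at this
  obtain ⟨q, hq⟩ := h1 (p - p') (by rw [map_sub, h, hb0]; simp)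
  exact ⟨q, by rw [hq]; simpa using hp'⟩

lemma key2 {R : Type} [CommRing R] [IsNoetherianRing R] [IsLocalRing R] (I J : Ideal R)
    (hIJ : I ⊓ J = ⊥) (hJm : J ≤ maximalIdeal R) (hJ : J ≠ ⊥) {P3 P2 P1 P0 : Type}
    [AddCommGroup P3] [Module R P3]
    [AddCommGroup P2] [Module R P2] [AddCommGroup P1] [Module R P1] [AddCommGroup P0] [Module R P0]
    [Module.Projective R P1] [Module.Projective R P0]
    (d3 : P3 →ₗ[R] P2) (d2 : P2 →ₗ[R] P1) (d1 : P1 →ₗ[R] P0) (e : P0 →ₗ[R] R ⧸ J)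
    (hed : ∀ p, e (d1 p) = 0) (hdd : ∀ p, d1 (d2 p) = 0) (hdd' : ∀ p, d2 (d3 p) = 0)
    (h1 : ∀ p, d1 p = 0 → ∃ q, d2 q = p) (h0 : ∀ p, e p = 0 → ∃ q, d1 q = p)
    (he : Function.Surjective e)
    (hex : ∀ p : P2, d2 p ∈ I • (⊤ : Submodule R P1) →
      ∃ q : P3, p - d3 q ∈ I • (⊤ : Submodule R P2)) : I = ⊥ := by
  obtain ⟨e0, he0⟩ := he 1
  have : Nontrivial J := Submodule.nontrivial_iff_ne_bot.mpr hJ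
  obtain ⟨N, hN⟩ := IsCoatomic.exists_coatom (Submodule R J)
  have hs : IsSimpleModule R (J ⧸ N) := isSimpleModule_iff_isCoatom.mpr hN
  obtain ⟨M, hM, ⟨eqv⟩⟩ := isSimpleModule_iff_quot_maximal.mp hs
  obtain rfl : M = maximalIdeal R := IsLocalRing.eq_maximalIdeal hM
  let φ : J →ₗ[R] R ⧸ maximalIdeal R := eqv.toLinearMap ∘ₗ N.mkQ
  have hφ : Function.Surjective φ := eqv.surjective.comp N.mkQ_surjective
  obtain ⟨ε, hε⟩ := Module.projective_lifting_property (Submodule.mkQ J) e (Submodule.mkQ_surjective J)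
  have hε' : ∀ p, Ideal.Quotient.mk J (ε p) = e p := fun p => LinearMap.congr_fun hε p
  let θ : P1 →ₗ[R] J := (ε ∘ₗ d1).codRestrict J (fun p => by
    rw [← Ideal.Quotient.eq_zero_iff_mem]; exact (hε' _).trans (hed p))
  obtain ⟨ψ, hψ⟩ := Module.projective_lifting_property (Submodule.mkQ (maximalIdeal R)) (φ ∘ₗ θ)
    (Submodule.mkQ_surjective _)
  have hψ' : ∀ p, Ideal.Quotient.mk (maximalIdeal R) (ψ p) = φ (θ p) :=
    fun p => LinearMap.congr_fun hψ p
  obtain ⟨j, hj⟩ := hφ 1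
  obtain ⟨p, hp⟩ := h0 ((j : R) • e0) (by
    rw [map_smul, he0, Algebra.smul_def, mul_one]
    exact Ideal.Quotient.eq_zero_iff_mem.mpr j.2)
  -- `ψ p` is a unit
  have hθp : θ p = ε e0 • j := by
    apply Subtype.ext
    change ε (d1 p) = ε e0 * j
    rw [hp, map_smul, smul_eq_mul, mul_comm]
  have hu : Ideal.Quotient.mk (maximalIdeal R) (ε e0) = 1 := by
    rw [← map_one (Ideal.Quotient.mk (maximalIdeal R)), Ideal.Quotient.eq]
    apply hJm
    rw [← Ideal.Quotient.eq, hε', he0, map_one]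
  have hψp : Ideal.Quotient.mk (maximalIdeal R) (ψ p) = 1 := by
    rw [hψ', hθp, map_smul, hj, Algebra.smul_def, mul_one]
    exact hu
  have hunit : IsUnit (ψ p) := by
    by_contra hcon
    have : ψ p ∈ maximalIdeal R := (mem_maximalIdeal _).mpr hcon
    rw [Ideal.Quotient.eq_zero_iff_mem.mpr this] at hψp
    exact zero_ne_one hψp
  have hsub : ∀ w ∈ I • (⊤ : Submodule R P2), ψ (d2 w) ∈ maximalIdeal R * I := by
    intro w hw
    refine Submodule.smul_induction_on hw ?_ ?_
    · intro i hi n _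
      rw [map_smul, map_smul, smul_eq_mul, mul_comm i]
      refine Ideal.mul_mem_mul ?_ hi
      rw [← Ideal.Quotient.eq_zero_iff_mem, hψ']
      have : θ (d2 n) = 0 := by
        apply Subtype.ext
        change ε (d1 (d2 n)) = 0
        rw [hdd, map_zero]
      rw [this, map_zero]
    · intro x y hx hy
      rw [map_add, map_add]; exact add_mem hx hy
  refine Submodule.eq_bot_of_le_smul_of_le_jacobson_bot (maximalIdeal R) I
    (IsNoetherian.noetherian I) ?_ (IsLocalRing.jacobson_eq_maximalIdeal ⊥ bot_ne_top).ge
  intro i hi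
  have hij : i * (j : R) = 0 := by
    have : i * (j : R) ∈ I ⊓ J := ⟨I.mul_mem_right _ hi, J.mul_mem_left _ j.2⟩
    rwa [hIJ] at this
  obtain ⟨q, hq⟩ := h1 (i • p) (by rw [map_smul, hp, smul_smul, hij, zero_smul])
  obtain ⟨r, hr⟩ := hex q (by rw [hq]; exact Submodule.smul_mem_smul hi trivial)
  have h := hsub _ hr
  rw [map_sub, hdd', sub_zero, hq, map_smul, smul_eq_mul] at h
  rw [smul_eq_mul]
  exact (Ideal.mul_unit_mem_iff_mem _ hunit).mp h

lemma main_aux (R : Type) [CommRing R] [IsNoetherianRing R] [IsLocalRing R] (I J : Ideal R)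
    (hIJ : I ⊓ J = ⊥) (hJm : J ≤ maximalIdeal R) (hI : I ≠ ⊥) (hJ : J ≠ ⊥) :
    TorVanish R (R ⧸ I) (R ⧸ J) 1 ∧ ¬ TorVanish R (R ⧸ I) (R ⧸ J) 2 := by
  let P : ProjectiveResolution (ModuleCat.of R (R ⧸ J)) := projectiveResolution _
  have hproj : ∀ n, Module.Projective R (P.complex.X n) := fun n =>
    (IsProjective.iff_projective _).mpr (P.projective n)
  let e : P.complex.X 0 →ₗ[R] R ⧸ J := (P.π.f 0).hom
  have he : Function.Surjective e := (ModuleCat.epi_iff_surjective (P.π.f 0)).mp inferInstance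
  have hed : ∀ p, e ((P.complex.d 1 0).hom p) = 0 := fun p =>
    LinearMap.congr_fun (congrArg ModuleCat.Hom.hom P.complex_d_comp_π_f_zero) p
  have hdd : ∀ n p, (P.complex.d (n + 1) n).hom ((P.complex.d (n + 2) (n + 1)).hom p) = 0 :=
    fun n p => LinearMap.congr_fun
      (congrArg ModuleCat.Hom.hom (P.complex.d_comp_d (n + 2) (n + 1) n)) p
  have h1 := (ShortComplex.moduleCat_exact_iff _).mp (P.exact_succ 0)
  have h0 := (ShortComplex.moduleCat_exact_iff _).mp P.exact₀
  constructor
  · rw [torVanish_iff I P 0]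
    exact key1 I J hIJ _ _ e hed h1 h0 he
  · rw [torVanish_iff I P 1]
    intro hex
    exact hI (key2 I J hIJ hJm hJ _ _ _ e hed (hdd 0) (hdd 1) h1 h0 he hex)

lemma sInf_ne_bot_aux (R : Type) [CommRing R] [IsNoetherianRing R] [IsReduced R]
    (S : Set (Ideal R)) (hS : S ⊆ minimalPrimes R) (hS2 : S ≠ minimalPrimes R) :
    sInf S ≠ ⊥ := by
  intro h
  obtain ⟨q, hq, hqS⟩ : ∃ q ∈ minimalPrimes R, q ∉ S := by
    by_contra! hcon
    exact hS2 (hS.antisymm hcon)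
  have hfin : S.Finite := (minimalPrimes.finite_of_isNoetherianRing R).subset hS
  have hqp : q.IsPrime := hq.1.1
  have hle : hfin.toFinset.inf id ≤ q := by
    rw [Finset.inf_id_eq_sInf, hfin.coe_toFinset, h]; exact bot_le
  obtain ⟨p, hp, hpq⟩ := (Ideal.IsPrime.inf_le' hqp).mp hle
  have hp' : p ∈ S := by simpa using hp
  have : q ≤ p := hq.2 (hS hp').1 hpq
  exact hqS (le_antisymm this hpq ▸ hp')

theorem statement8 (R : Type) [CommRing R] [IsNoetherianRing R] [IsLocalRing R]
    [IsReduced R] (hnd : ¬ IsDomain R)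
    (hGor : InjDimFinite R R)
    (hdim : ringKrullDim R = 1)
    (hmin : ∃ x ∈ maximalIdeal R, IsSMulRegular R x ∧
      maximalIdeal R ^ 2 = Ideal.span {x} * maximalIdeal R)
    (S : Set (Ideal R)) (hS : S ⊆ minimalPrimes R) (hS1 : S.Nonempty)
    (hS2 : S ≠ minimalPrimes R) :
    TorVanish R (R ⧸ sInf S) (R ⧸ sInf (minimalPrimes R \ S)) 1 ∧
    ¬ TorVanish R (R ⧸ sInf S) (R ⧸ sInf (minimalPrimes R \ S)) 2 ∧
    ¬ TorRigid R (R ⧸ sInf S) ∧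
    ¬ TorRigid R (R ⧸ sInf (minimalPrimes R \ S)) := by
  have hle : ∀ T : Set (Ideal R), T ⊆ minimalPrimes R → T.Nonempty →
      sInf T ≤ maximalIdeal R := by
    rintro T hT ⟨p, hp⟩
    have : p.IsPrime := (hT hp).1.1
    exact (sInf_le hp).trans (IsLocalRing.le_maximalIdeal this.ne_top)
  have hinf : sInf S ⊓ sInf (minimalPrimes R \ S) = ⊥ := by
    rw [← sInf_union, Set.union_sdiff_cancel hS, minimalPrimes, Ideal.sInf_minimalPrimes]
    exact nilradical_eq_zero R
  have hT : minimalPrimes R \ S ⊆ minimalPrimes R := Set.sdiff_subset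
  have hT1 : (minimalPrimes R \ S).Nonempty := by
    rw [Set.nonempty_iff_ne_empty, Ne, Set.sdiff_eq_empty]
    exact fun h => hS2 (hS.antisymm h)
  have hT2 : minimalPrimes R \ S ≠ minimalPrimes R := by
    intro h
    obtain ⟨p, hp⟩ := hS1
    have := hS hp
    rw [← h] at this
    exact this.2 hp
  have hI := sInf_ne_bot_aux R S hS hS2
  have hJ := sInf_ne_bot_aux R _ hT hT2
  have A := main_aux R _ _ hinf (hle _ hT hT1) hI hJ
  have B := main_aux R _ _ ((inf_comm _ _).trans hinf) (hle _ hS hS1) hJ hI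
  refine ⟨A.1, A.2, fun h => A.2 ?_, fun h => B.2 ?_⟩
  · exact h (ModuleCat.of R _) (inferInstanceAs (Module.Finite R (R ⧸ sInf (minimalPrimes R \ S))))
      1 le_rfl A.1 2 one_le_two
  · exact h (ModuleCat.of R _) (inferInstanceAs (Module.Finite R (R ⧸ sInf S)))
      1 le_rfl B.1 2 one_le_two
end
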